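/- Let X ⊂ ℂ be a non-separating continuum with 0 ∈ Bd(X) and X ⊂ B(0,1), and suppose X̂ = A ∪ B where A and B are disjoint, closed, nonempty sets such that A lies above B. Then the equidistant set E(A,B) is a closed ray, the real part function maps E(A,B) onto all of ℝ, and for every x > 0 the set {z ∈ E(A,B) : Re z = x} consists of exactly one point. -/

import Mathlib

open Set Metric Topology Filter

/-- The set of connected components of a set `S`. -/
def componentsOf {α : Type*} [TopologicalSpace α] (S : Set α) : Set (Set α) :=
  {C | ∃ x ∈ S, C = connectedComponentIn S x}

/-- `X̂ = exp⁻¹(X \ {0})`. -/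
def hatSet (X : Set ℂ) : Set ℂ := Complex.exp ⁻¹' (X \ {0})

/-- The conditions on the path `s` in the definition of "C lies above D":
`s : [0,1] → {z : Re z ≤ 0} \ C`, `s 0 ∈ D`, `s 1 = 0`. -/
def AbovePath (C D : Set ℂ) (s : ℝ → ℂ) : Prop :=
  ContinuousOn s (Set.Icc 0 1) ∧ (∀ u ∈ Set.Icc (0:ℝ) 1, (s u).re ≤ 0 ∧ s u ∉ C) ∧
    s 0 ∈ D ∧ s 1 = 0

/-- The ray `R = s([0,1]) ∪ [0,∞)` associated to the path `s`. -/
def AboveRay (s : ℝ → ℂ) : Set ℂ := s '' Set.Icc 0 1 ∪ (Complex.ofReal '' Set.Ici 0)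

/-- `C` is contained in the unbounded component of `ℂ \ (D ∪ R)` containing `1 + 2πi`. -/
def AboveVia (C D : Set ℂ) (s : ℝ → ℂ) : Prop :=
  ¬ Bornology.IsBounded
      (connectedComponentIn (D ∪ AboveRay s)ᶜ ((1 : ℂ) + 2 * (Real.pi : ℂ) * Complex.I)) ∧
  C ⊆ connectedComponentIn (D ∪ AboveRay s)ᶜ ((1 : ℂ) + 2 * (Real.pi : ℂ) * Complex.I)

/-- `C` lies above `D`. -/
def LiesAbove (C D : Set ℂ) : Prop := ∃ s : ℝ → ℂ, AbovePath C D s ∧ AboveVia C D s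

/-- `A` lies above `B`: every component of `A` lies above every component of `B`. -/
def LiesAboveSets (A B : Set ℂ) : Prop :=
  ∀ C ∈ componentsOf A, ∀ D ∈ componentsOf B, LiesAbove C D

/-- The equidistant set `E(A,B) = {z : dist(z,A) = dist(z,B)}`. -/
def equidistSet (A B : Set ℂ) : Set ℂ :=
  {z : ℂ | Metric.infDist z A = Metric.infDist z B}

/-- `E` is a closed ray: a closed subset of `ℂ` homeomorphic to `ℝ`. -/
def IsClosedRay (E : Set ℂ) : Prop := IsClosed E ∧ Nonempty (E ≃ₜ ℝ)

/-!
Every component of `X̂` is a left tail: a closed connected set in a left half-plane that reaches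
`re = -∞`. For a left tail `S` the functions `log (z - c)`, `c ∈ S`, have branches on the part of
the complement to the right of `S`, and one left tail being above another becomes a bound on the
argument of these branches far to the left.

Turning around a point `c` of `A` from a high point of a vertical line until the component of `c` is
hit, one stays in the open Voronoi region of `A`, which is therefore connected; similarly for `B`.
The closed Voronoi regions are then connected too; they cover the plane, so their intersection
`E(A,B)` is connected because the plane is unicoherent.

For `p ∈ E(A,B)`, the segment from `p` to a nearest point of `A`, prolonged by the component of `A`
through that point, is a left tail, and it provides a branch of `log (e - p)` on the region of `B`;
exchanging `A` and `B` gives a branch on the region of `A`. These agree on one side of `p` in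
`E(A,B)` and differ on the other. The difference of `log (e - z)` and `log (z - e)` is a constant
logarithm of `-1`, so that if `q` is on the right of `p`, then `p` is not on the right of `q`. Hence
the right sides are the right rays of a linear order on `E(A,B)`, and a connected, locally compact,
separable ordered space without end points is a line. Finally, if two points of `E(A,B)` had the
same positive real part, the left tails through them would have to cross.
-/

/-! ### Logarithms on the complement of a left tail -/

section Connectedness

variable {α β : Type*} [TopologicalSpace α] [LinearOrder β] [TopologicalSpace β]
  [OrderClosedTopology β] {K : Set α} {φ : α → β} {l u : β} {x₀ : α}

lemma forall_gt_of_forall_ne (hK : IsPreconnected K) (hφ : ContinuousOn φ K)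
    (hl : ∀ x ∈ K, φ x ≠ l) (hx₀ : x₀ ∈ K) (h₀ : l < φ x₀) : ∀ x ∈ K, l < φ x := by
  intro x hx
  by_contra! hle
  obtain ⟨y, hy, hyl⟩ := hK.intermediate_value hx hx₀ hφ ⟨hle, h₀.le⟩
  exact hl y hy hyl

lemma forall_lt_of_forall_ne (hK : IsPreconnected K) (hφ : ContinuousOn φ K)
    (hu : ∀ x ∈ K, φ x ≠ u) (hx₀ : x₀ ∈ K) (h₀ : φ x₀ < u) : ∀ x ∈ K, φ x < u :=
  forall_gt_of_forall_ne (β := βᵒᵈ) hK hφ hu hx₀ h₀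

lemma forall_mem_Ioo_of_forall_ne (hK : IsPreconnected K) (hφ : ContinuousOn φ K)
    (hl : ∀ x ∈ K, φ x ≠ l) (hu : ∀ x ∈ K, φ x ≠ u) (hx₀ : x₀ ∈ K) (h₀ : φ x₀ ∈ Ioo l u) :
    ∀ x ∈ K, φ x ∈ Ioo l u := fun x hx =>
  ⟨forall_gt_of_forall_ne hK hφ hl hx₀ h₀.1 x hx, forall_lt_of_forall_ne hK hφ hu hx₀ h₀.2 x hx⟩

lemma exists_isCompact_isPreconnected_of_subset_isOpen [LocallyPathConnectedSpace α] {G O : Set α}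
    (hG : IsPreconnected G) (hO : IsOpen O) (hGO : G ⊆ O) {x y : α} (hx : x ∈ G) (hy : y ∈ G) :
    ∃ J ⊆ O, IsCompact J ∧ IsPreconnected J ∧ x ∈ J ∧ y ∈ J := by
  have hconn : IsConnected (connectedComponentIn O x) :=
    isConnected_connectedComponentIn_iff.2 (hGO hx)
  have hpath := hO.connectedComponentIn.isConnected_iff_isPathConnected.1 hconn
  have hjoined := hpath.joinedIn x (mem_connectedComponentIn (hGO hx)) y
    (hG.subset_connectedComponentIn hx hGO hy)
  refine ⟨range hjoined.somePath, ?_, isCompact_range hjoined.somePath.continuous,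
    isPreconnected_range hjoined.somePath.continuous, ⟨0, by simp⟩, ⟨1, by simp⟩⟩
  exact (range_subset_iff.2 hjoined.somePath_mem).trans (connectedComponentIn_subset _ _)

lemma exists_isCompact_isPreconnected_mem_nhds [LocallyPathConnectedSpace α]
    [LocallyCompactSpace α] [T2Space α] {Ω : Set α} (hΩ : IsOpen Ω) (hΩc : IsPreconnected Ω)
    {p x : α} (hp : p ∈ Ω) (hx : x ∈ Ω) :
    ∃ K ⊆ Ω, IsCompact K ∧ IsPreconnected K ∧ p ∈ K ∧ K ∈ 𝓝 x := by
  obtain ⟨J, hJΩ, hJ, hJc, hpJ, hxJ⟩ :=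
    exists_isCompact_isPreconnected_of_subset_isOpen hΩc hΩ le_rfl hp hx
  obtain ⟨C, hCx, hCΩ, hC⟩ := local_compact_nhds (hΩ.mem_nhds hx)
  obtain ⟨V, ⟨hVx, hV⟩, hVC⟩ := (path_connected_basis x).mem_iff.1 hCx
  have hVC' : closure V ⊆ C := closure_minimal hVC hC.isClosed
  refine ⟨J ∪ closure V, union_subset hJΩ (hVC'.trans hCΩ),
    hJ.union (hC.of_isClosed_subset isClosed_closure hVC'), ?_, Or.inl hpJ,
    mem_of_superset hVx (subset_closure.trans subset_union_right)⟩
  exact hJc.union x hxJ (subset_closure (mem_of_mem_nhds hVx)) hV.isConnected.isPreconnected.closure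

end Connectedness

section Logarithms

variable {α : Type*} [TopologicalSpace α]

lemma eqOn_of_exp_eq {K : Set α} (hK : IsPreconnected K) {l₁ l₂ : α → ℂ}
    (h₁ : ContinuousOn l₁ K) (h₂ : ContinuousOn l₂ K)
    (h : ∀ x ∈ K, Complex.exp (l₁ x) = Complex.exp (l₂ x))
    {x₀ : α} (hx₀ : x₀ ∈ K) (h₀ : l₁ x₀ = l₂ x₀) : EqOn l₁ l₂ K :=
  Complex.isCoveringMap_exp.eqOn_of_comp_eqOn hK h₁ h₂ (fun x hx => Subtype.ext (h x hx)) hx₀ h₀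

lemma exists_log_eq_at {K : Set α} {g : α → ℂ} {p : α} (hp : p ∈ K)
    (h : ∃ l : α → ℂ, ContinuousOn l K ∧ ∀ x ∈ K, Complex.exp (l x) = g x)
    {w : ℂ} (hw : Complex.exp w = g p) :
    ∃ l : α → ℂ, ContinuousOn l K ∧ (∀ x ∈ K, Complex.exp (l x) = g x) ∧ l p = w := by
  obtain ⟨l, hl, hexp⟩ := h
  refine ⟨fun x => l x + (w - l p), hl.add continuousOn_const, fun x hx => ?_, by ring⟩
  rw [Complex.exp_add, Complex.exp_sub, hw, hexp p hp, hexp x hx, div_self, mul_one]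
  exact hw ▸ Complex.exp_ne_zero w

lemma exists_log_of_forall_isCompact [LocallyPathConnectedSpace α] [LocallyCompactSpace α]
    [T2Space α] {Ω : Set α} (hΩ : IsOpen Ω) (hΩc : IsPreconnected Ω) {g : α → ℂ} {p : α}
    (hp : p ∈ Ω) (hlog : ∀ K ⊆ Ω, IsCompact K →
      ∃ l : α → ℂ, ContinuousOn l K ∧ ∀ x ∈ K, Complex.exp (l x) = g x)
    {w : ℂ} (hw : Complex.exp w = g p) :
    ∃ l : α → ℂ, ContinuousOn l Ω ∧ (∀ x ∈ Ω, Complex.exp (l x) = g x) ∧ l p = w := by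
  have hlog' (K : Set α) (hKΩ : K ⊆ Ω) (hK : IsCompact K) (hpK : p ∈ K) :=
    exists_log_eq_at hpK (hlog K hKΩ hK) hw
  choose! K hKΩ hK hKc hpK hKx using fun x (hx : x ∈ Ω) =>
    exists_isCompact_isPreconnected_mem_nhds hΩ hΩc hp hx
  choose! l hl hexp hlp using fun x (hx : x ∈ Ω) => hlog' (K x) (hKΩ x hx) (hK x hx) (hpK x hx)
  have hagree : ∀ x ∈ Ω, ∀ y ∈ Ω, ∀ z ∈ K x ∩ K y, l x z = l y z := by
    intro x hx y hy z hz
    obtain ⟨n, hn, hnexp, hnp⟩ := hlog' (K x ∪ K y) (union_subset (hKΩ x hx) (hKΩ y hy))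
      ((hK x hx).union (hK y hy)) (Or.inl (hpK x hx))
    have hxn := eqOn_of_exp_eq (hKc x hx) (hl x hx) (hn.mono subset_union_left)
      (fun t ht => (hexp x hx t ht).trans (hnexp t (Or.inl ht)).symm) (hpK x hx)
      ((hlp x hx).trans hnp.symm) hz.1
    have hyn := eqOn_of_exp_eq (hKc y hy) (hl y hy) (hn.mono subset_union_right)
      (fun t ht => (hexp y hy t ht).trans (hnexp t (Or.inr ht)).symm) (hpK y hy)
      ((hlp y hy).trans hnp.symm) hz.2
    exact hxn.trans hyn.symm
  have hself : ∀ x ∈ Ω, x ∈ K x := fun x hx => mem_of_mem_nhds (hKx x hx)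
  refine ⟨fun x => l x x, fun x hx => ?_, fun x hx => hexp x hx x (hself x hx), hlp p hp⟩
  refine (((hl x hx).continuousAt (hKx x hx)).congr ?_).continuousWithinAt
  filter_upwards [hKx x hx] with z hz
  exact hagree x hx z (hKΩ x hx hz) z ⟨hz, hself z (hKΩ x hx hz)⟩

lemma div_sub_mem_slitPlane {c c' e : ℂ} (h : e ∉ segment ℝ c c') :
    (e - c) / (e - c') ∈ Complex.slitPlane := by
  have hc : c - e ≠ 0 := sub_ne_zero.2 fun h' => h (h' ▸ left_mem_segment ℝ c c')
  have hc' : c' - e ≠ 0 := sub_ne_zero.2 fun h' => h (h' ▸ right_mem_segment ℝ c c')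
  rw [← neg_div_neg_eq, neg_sub, neg_sub, Complex.mem_slitPlane_iff_arg]
  refine ⟨fun harg => h ?_, div_ne_zero hc hc'⟩
  have hangle : EuclideanGeometry.angle c e c' = Real.pi := by
    rw [EuclideanGeometry.angle, vsub_eq_sub, vsub_eq_sub, Complex.angle_eq_abs_arg hc hc', harg,
      abs_of_pos Real.pi_pos]
  exact (EuclideanGeometry.angle_eq_pi_iff_sbtw.1 hangle).wbtw.mem_segment

lemma exp_log_div_sub {c c' e : ℂ} (h : e ∉ segment ℝ c c') :
    Complex.exp (Complex.log ((e - c) / (e - c'))) * (e - c') = e - c := by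
  rw [Complex.exp_log (Complex.slitPlane_ne_zero (div_sub_mem_slitPlane h))]
  exact div_mul_cancel₀ _ (sub_ne_zero.2 fun h' => h (h' ▸ right_mem_segment ℝ c c'))

lemma continuousOn_log_div_sub {K : Set ℂ} {c c' : ℂ} (h : Disjoint K (segment ℝ c c')) :
    ContinuousOn (fun e => Complex.log ((e - c) / (e - c'))) K := by
  have hK : ∀ e ∈ K, e ∉ segment ℝ c c' := fun e he => disjoint_left.1 h he
  refine ContinuousOn.clog (ContinuousOn.div (by fun_prop) (by fun_prop) fun e he => ?_)
    fun e he => div_sub_mem_slitPlane (hK e he)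
  exact sub_ne_zero.2 fun h' => hK e he (h' ▸ right_mem_segment ℝ c c')

lemma exists_log_div_sub {S K : Set ℂ} (hS : IsPreconnected S) (hK : IsClosed K)
    (hKS : Disjoint K S) {c c' : ℂ} (hc : c ∈ S) (hc' : c' ∈ S) :
    ∃ L : ℂ → ℂ, ContinuousOn L K ∧ ∀ e ∈ K, Complex.exp (L e) * (e - c') = e - c := by
  refine hS.induction₂ (fun c c' => ∃ L : ℂ → ℂ, ContinuousOn L K ∧
    ∀ e ∈ K, Complex.exp (L e) * (e - c') = e - c) ?_ ?_ ?_ hc hc'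
  · intro x hx
    obtain ⟨δ, hδ, hball⟩ := Metric.isOpen_iff.1 hK.isOpen_compl x (disjoint_right.1 hKS hx)
    filter_upwards [mem_nhdsWithin_of_mem_nhds (ball_mem_nhds x hδ)] with y hy
    have hseg : Disjoint K (segment ℝ x y) := disjoint_right.2 fun e he =>
      hball ((convex_ball x δ).segment_subset (mem_ball_self hδ) hy he)
    exact ⟨_, continuousOn_log_div_sub hseg, fun e he => exp_log_div_sub (disjoint_left.1 hseg he)⟩
  · rintro x y z - - - ⟨L₁, h₁, h₁'⟩ ⟨L₂, h₂, h₂'⟩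
    refine ⟨fun e => L₁ e + L₂ e, h₁.add h₂, fun e he => ?_⟩
    rw [Complex.exp_add, ← h₁' e he, ← h₂' e he]; ring
  · rintro x y - - ⟨L, h, h'⟩
    refine ⟨fun e => -L e, h.neg, fun e he => ?_⟩
    rw [Complex.exp_neg, ← h' e he, inv_mul_cancel_left₀ (Complex.exp_ne_zero _)]

lemma sub_mem_slitPlane_of_re_lt {e c : ℂ} (h : c.re < e.re) : e - c ∈ Complex.slitPlane :=
  Or.inl (by simpa using h)

lemma log_div_of_re_pos {z w : ℂ} (hz : 0 < z.re) (hw : 0 < w.re) :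
    Complex.log (z / w) = Complex.log z - Complex.log w := by
  have hz₀ : z ≠ 0 := Complex.slitPlane_ne_zero (Or.inl hz)
  have hw₀ : w ≠ 0 := Complex.slitPlane_ne_zero (Or.inl hw)
  have hargz := abs_lt.1 (Complex.abs_arg_lt_pi_div_two_iff.2 (Or.inl hz))
  have hargw := abs_lt.1 (Complex.abs_arg_lt_pi_div_two_iff.2 (Or.inl hw))
  rw [← Complex.log_exp (x := Complex.log z - Complex.log w), Complex.exp_sub, Complex.exp_log hz₀,
    Complex.exp_log hw₀] <;>
  simp only [Complex.sub_im, Complex.log_im] <;> linarith [hargz.1, hargz.2, hargw.1, hargw.2]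

end Logarithms

/-- A left tail: a closed connected set in the half-plane `re < ρ` that extends to `re = -∞`. The
components of `X̂` are left tails with `ρ = 0`; larger values of `ρ` occur when bounded pieces are
attached to them. -/
structure IsLeftTail (S : Set ℂ) (ρ : ℝ) : Prop where
  isClosed : IsClosed S
  isPreconnected : IsPreconnected S
  re_lt : ∀ z ∈ S, z.re < ρ
  exists_re_lt : ∀ m : ℝ, ∃ z ∈ S, z.re < m

/-- The component of the complement of `S` on the right of `S`: it contains the half-plane
`ρ ≤ re` when `S` is a left tail with bound `ρ`. -/
def rightDomain (S : Set ℂ) (ρ : ℝ) : Set ℂ := connectedComponentIn Sᶜ (ρ : ℂ)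

open Classical in
/-- The branch of `e ↦ log (e - c)` on `rightDomain S ρ` that is the principal one on `ρ ≤ re`. It
exists when `S` is a left tail with bound `ρ` and `c ∈ S`; the junk value is `0`. -/
noncomputable def logBranch (S : Set ℂ) (ρ : ℝ) (c : ℂ) : ℂ → ℂ :=
  if h : ∃ l : ℂ → ℂ, ContinuousOn l (rightDomain S ρ) ∧
      (∀ e ∈ rightDomain S ρ, Complex.exp (l e) = e - c) ∧
      ∀ e : ℂ, ρ ≤ e.re → l e = Complex.log (e - c) then h.choose else 0

section RightDomain

variable {S : Set ℂ} {ρ : ℝ}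

lemma isPreconnected_rightDomain : IsPreconnected (rightDomain S ρ) :=
  isPreconnected_connectedComponentIn

lemma rightDomain_subset_compl : rightDomain S ρ ⊆ Sᶜ := connectedComponentIn_subset _ _

lemma isPreconnected_setOf_le_re (ρ : ℝ) : IsPreconnected {z : ℂ | ρ ≤ z.re} :=
  (convex_halfSpace_re_ge ρ).isPreconnected

lemma subset_rightDomain {K : Set ℂ} (hK : IsPreconnected K) (hKS : K ⊆ Sᶜ) {e : ℂ} (he : e ∈ K)
    (he' : e ∈ rightDomain S ρ) : K ⊆ rightDomain S ρ := by
  rw [rightDomain, connectedComponentIn_eq he']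
  exact hK.subset_connectedComponentIn he hKS

end RightDomain

namespace IsLeftTail

variable {S : Set ℂ} {ρ : ℝ} {c : ℂ}

lemma isOpen_rightDomain (h : IsLeftTail S ρ) : IsOpen (rightDomain S ρ) :=
  h.isClosed.isOpen_compl.connectedComponentIn

lemma mem_rightDomain (h : IsLeftTail S ρ) {e : ℂ} (he : ρ ≤ e.re) : e ∈ rightDomain S ρ :=
  (isPreconnected_setOf_le_re ρ).subset_connectedComponentIn (x := (ρ : ℂ)) (by simp)
    (fun z hz hzS => (h.re_lt z hzS).not_ge hz) he

lemma ofReal_mem_rightDomain (h : IsLeftTail S ρ) : (ρ : ℂ) ∈ rightDomain S ρ :=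
  h.mem_rightDomain (by simp)

lemma rightDomain_anti {S' : Set ℂ} {ρ' : ℝ} (h : IsLeftTail S ρ) (h' : IsLeftTail S' ρ')
    (hS : S ⊆ S') : rightDomain S' ρ' ⊆ rightDomain S ρ :=
  subset_rightDomain isPreconnected_rightDomain
    (rightDomain_subset_compl.trans (compl_subset_compl.2 hS)) (e := (max ρ ρ' : ℝ))
    (h'.mem_rightDomain (by simp)) (h.mem_rightDomain (by simp))

lemma exists_log_sub_of_isCompact (h : IsLeftTail S ρ) (hc : c ∈ S) {K : Set ℂ}
    (hK : IsCompact K) (hKS : Disjoint K S) :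
    ∃ l : ℂ → ℂ, ContinuousOn l K ∧ ∀ e ∈ K, Complex.exp (l e) = e - c := by
  obtain ⟨m, hm⟩ := (hK.image Complex.continuous_re).bddBelow
  obtain ⟨c', hc', hc'm⟩ := h.exists_re_lt m
  obtain ⟨L, hL, hL'⟩ := exists_log_div_sub h.isPreconnected hK.isClosed hKS hc hc'
  have hslit : ∀ e ∈ K, e - c' ∈ Complex.slitPlane := fun e he =>
    sub_mem_slitPlane_of_re_lt (hc'm.trans_le (hm (mem_image_of_mem _ he)))
  refine ⟨fun e => L e + Complex.log (e - c'), hL.add (ContinuousOn.clog (by fun_prop) hslit),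
    fun e he => ?_⟩
  rw [Complex.exp_add, Complex.exp_log (Complex.slitPlane_ne_zero (hslit e he)), hL' e he]

lemma exists_logBranch (h : IsLeftTail S ρ) (hc : c ∈ S) :
    ∃ l : ℂ → ℂ, ContinuousOn l (rightDomain S ρ) ∧
      (∀ e ∈ rightDomain S ρ, Complex.exp (l e) = e - c) ∧
      ∀ e : ℂ, ρ ≤ e.re → l e = Complex.log (e - c) := by
  have hslit : ∀ e ∈ {z : ℂ | ρ ≤ z.re}, e - c ∈ Complex.slitPlane := fun e he =>
    sub_mem_slitPlane_of_re_lt ((h.re_lt c hc).trans_le he)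
  have hexp : ∀ e ∈ {z : ℂ | ρ ≤ z.re}, Complex.exp (Complex.log (e - c)) = e - c := fun e he =>
    Complex.exp_log (Complex.slitPlane_ne_zero (hslit e he))
  obtain ⟨l, hl, hlexp, hlρ⟩ := exists_log_of_forall_isCompact h.isOpen_rightDomain
    isPreconnected_rightDomain h.ofReal_mem_rightDomain (fun K hK hKc =>
      h.exists_log_sub_of_isCompact hc hKc
        (disjoint_left.2 fun _ he => rightDomain_subset_compl (hK he)))
    (hexp ρ (by simp))
  refine ⟨l, hl, hlexp, fun e he => ?_⟩
  exact eqOn_of_exp_eq (isPreconnected_setOf_le_re ρ) (hl.mono fun z hz => h.mem_rightDomain hz)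
    (l₂ := fun e => Complex.log (e - c)) (ContinuousOn.clog (by fun_prop) hslit)
    (fun z hz => (hlexp z (h.mem_rightDomain hz)).trans (hexp z hz).symm)
    (x₀ := (ρ : ℂ)) (by simp) hlρ he

lemma logBranch_spec (h : IsLeftTail S ρ) (hc : c ∈ S) :
    ContinuousOn (logBranch S ρ c) (rightDomain S ρ) ∧
      (∀ e ∈ rightDomain S ρ, Complex.exp (logBranch S ρ c e) = e - c) ∧
      ∀ e : ℂ, ρ ≤ e.re → logBranch S ρ c e = Complex.log (e - c) := by
  rw [logBranch, dif_pos (h.exists_logBranch hc)]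
  exact (h.exists_logBranch hc).choose_spec

lemma continuousOn_logBranch (h : IsLeftTail S ρ) (hc : c ∈ S) :
    ContinuousOn (logBranch S ρ c) (rightDomain S ρ) :=
  (h.logBranch_spec hc).1

lemma exp_logBranch (h : IsLeftTail S ρ) (hc : c ∈ S) {e : ℂ} (he : e ∈ rightDomain S ρ) :
    Complex.exp (logBranch S ρ c e) = e - c :=
  (h.logBranch_spec hc).2.1 e he

lemma logBranch_eq_log (h : IsLeftTail S ρ) (hc : c ∈ S) {e : ℂ} (he : ρ ≤ e.re) :
    logBranch S ρ c e = Complex.log (e - c) :=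
  (h.logBranch_spec hc).2.2 e he

lemma continuousOn_im_logBranch (h : IsLeftTail S ρ) (hc : c ∈ S) :
    ContinuousOn (fun e => (logBranch S ρ c e).im) (rightDomain S ρ) :=
  Complex.continuous_im.comp_continuousOn (h.continuousOn_logBranch hc)

lemma logBranch_eq_of_subset {S' : Set ℂ} {ρ' : ℝ} (h : IsLeftTail S ρ) (h' : IsLeftTail S' ρ')
    (hS : S ⊆ S') (hc : c ∈ S) {e : ℂ} (he : e ∈ rightDomain S' ρ') :
    logBranch S ρ c e = logBranch S' ρ' c e := by
  have hsub := h.rightDomain_anti h' hS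
  refine eqOn_of_exp_eq isPreconnected_rightDomain ((h.continuousOn_logBranch hc).mono hsub)
    (h'.continuousOn_logBranch (hS hc))
    (fun z hz => (h.exp_logBranch hc (hsub hz)).trans (h'.exp_logBranch (hS hc) hz).symm)
    (x₀ := ((max ρ ρ' : ℝ) : ℂ)) (h'.mem_rightDomain (by simp)) ?_ he
  rw [h.logBranch_eq_log hc (by simp), h'.logBranch_eq_log (hS hc) (by simp)]

lemma logBranch_eq_add_log_div {c' : ℂ} (h : IsLeftTail S ρ) (hc : c ∈ S) (hc' : c' ∈ S)
    {K : Set ℂ} (hK : IsPreconnected K) (hKS : K ⊆ Sᶜ) {r : ℂ} (hr : r ∈ K) (hρr : ρ ≤ r.re)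
    (hseg : Disjoint K (segment ℝ c c')) {e : ℂ} (he : e ∈ K) :
    logBranch S ρ c e = logBranch S ρ c' e + Complex.log ((e - c) / (e - c')) := by
  have hKdom : K ⊆ rightDomain S ρ := subset_rightDomain hK hKS hr (h.mem_rightDomain hρr)
  refine eqOn_of_exp_eq hK ((h.continuousOn_logBranch hc).mono hKdom)
    (l₂ := fun e => logBranch S ρ c' e + Complex.log ((e - c) / (e - c')))
    (((h.continuousOn_logBranch hc').mono hKdom).add (continuousOn_log_div_sub hseg))
    (fun z hz => ?_) hr ?_ he
  · rw [Complex.exp_add, h.exp_logBranch hc (hKdom hz), h.exp_logBranch hc' (hKdom hz), mul_comm,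
      exp_log_div_sub (disjoint_left.1 hseg hz)]
  · rw [h.logBranch_eq_log hc hρr, h.logBranch_eq_log hc' hρr, log_div_of_re_pos, add_sub_cancel]
    · simpa using (h.re_lt c hc).trans_le hρr
    · simpa using (h.re_lt c' hc').trans_le hρr

lemma continuousOn_logBranch_base (h : IsLeftTail S ρ) {e : ℂ} (he : e ∈ rightDomain S ρ) :
    ContinuousOn (fun c => logBranch S ρ c e) S := by
  obtain ⟨K, hKdom, hK, hKc, hρK, heK⟩ := exists_isCompact_isPreconnected_of_subset_isOpen
    isPreconnected_rightDomain h.isOpen_rightDomain le_rfl h.ofReal_mem_rightDomain he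
  intro c hc
  have hcK : c ∈ Kᶜ := fun hcK => rightDomain_subset_compl (hKdom hcK) hc
  obtain ⟨δ, hδ, hball⟩ := Metric.isOpen_iff.1 hK.isClosed.isOpen_compl c hcK
  have hec : e - c ≠ 0 := sub_ne_zero.2 (ne_of_mem_of_not_mem heK hcK)
  have hcont : ContinuousAt
      (fun c₁ => logBranch S ρ c e - Complex.log ((e - c) / (e - c₁))) c := by
    refine continuousAt_const.sub (ContinuousAt.clog ?_ ?_)
    · exact ContinuousAt.div (by fun_prop) (by fun_prop) hec
    · rw [div_self hec]; exact Complex.one_mem_slitPlane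
  refine hcont.continuousWithinAt.congr_of_eventuallyEq ?_ (by simp [div_self hec])
  filter_upwards [mem_nhdsWithin_of_mem_nhds (ball_mem_nhds c hδ), self_mem_nhdsWithin]
    with c₁ hc₁ hc₁S
  have hseg : Disjoint K (segment ℝ c c₁) := disjoint_right.2 fun z hz =>
    hball ((convex_ball c δ).segment_subset (mem_ball_self hδ) hc₁ hz)
  rw [h.logBranch_eq_add_log_div hc hc₁S hKc (hKdom.trans rightDomain_subset_compl) hρK (by simp)
    hseg heK, add_sub_cancel_right]

end IsLeftTail

/-! ### Components of the preimage of a continuum under the exponential map -/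

section ComponentNeighbourhoods

variable {α : Type*} [TopologicalSpace α] {Y : Set α}

lemma isClosed_connectedComponentIn (hY : IsClosed Y) (y : α) :
    IsClosed (connectedComponentIn Y y) := by
  by_cases hy : y ∈ Y
  · rw [connectedComponentIn_eq_image hy]
    exact hY.isClosedEmbedding_subtypeVal.isClosedMap _ isClosed_connectedComponent
  · rw [connectedComponentIn_eq_empty hy]
    exact isClosed_empty

lemma exists_isClopen_connectedComponent_subset [T2Space α] [CompactSpace α] {x : α} {W : Set α}
    (hW : IsOpen W) (hxW : connectedComponent x ⊆ W) : ∃ V : Set α, IsClopen V ∧ x ∈ V ∧ V ⊆ W := by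
  have : Nonempty {V : Set α // IsClopen V ∧ x ∈ V} := ⟨⟨univ, isClopen_univ, mem_univ x⟩⟩
  obtain ⟨⟨V, hV, hxV⟩, hVW⟩ := exists_subset_nhds_of_isCompact
    (V := fun V : {V : Set α // IsClopen V ∧ x ∈ V} => (V : Set α)) (U := W)
    (fun ⟨s, hs, hxs⟩ ⟨t, ht, hxt⟩ =>
      ⟨⟨s ∩ t, hs.inter ht, hxs, hxt⟩, inter_subset_left, inter_subset_right⟩)
    (fun V => V.2.1.1.isCompact)
    (fun z hz => hW.mem_nhds (hxW (by rwa [connectedComponent_eq_iInter_isClopen])))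
  exact ⟨V, hV, hxV, hVW⟩

variable [T2Space α] [LocallyCompactSpace α]

lemma exists_isOpen_mem_isCompact_inter (hY : IsClosed Y) {y : α} (hy : y ∈ Y)
    (hc : IsCompact (connectedComponentIn Y y)) :
    ∃ U : Set α, IsOpen U ∧ y ∈ U ∧ IsCompact (Y ∩ U) := by
  obtain ⟨O, hO, hPO, hOc⟩ := exists_isOpen_superset_and_isCompact_closure hc
  have hyO : y ∈ O := hPO (mem_connectedComponentIn hy)
  set Z : Set α := Y ∩ closure O
  have hyZ : y ∈ Z := ⟨hy, subset_closure hyO⟩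
  have : CompactSpace Z := isCompact_iff_compactSpace.1 (hOc.inter_left hY)
  have himage : ((↑) : Z → α) '' connectedComponent (⟨y, hyZ⟩ : Z) ⊆ O := by
    rw [← connectedComponentIn_eq_image hyZ]
    exact (connectedComponentIn_mono y inter_subset_left).trans hPO
  obtain ⟨V, hV, hyV, hVO⟩ := exists_isClopen_connectedComponent_subset
    (hO.preimage continuous_subtype_val) (image_subset_iff.1 himage)
  obtain ⟨U, hU, rfl⟩ := isOpen_induced_iff.1 hV.2
  refine ⟨U ∩ O, hU.inter hO, ⟨hyV, hyO⟩, ?_⟩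
  convert hV.1.isCompact.image continuous_subtype_val using 1
  rw [Subtype.image_preimage_coe]
  ext x
  constructor
  · exact fun ⟨hxY, hxU, hxO⟩ => ⟨⟨hxY, subset_closure hxO⟩, hxU⟩
  · exact fun ⟨hxZ, hxU⟩ => ⟨hxZ.1, hxU, hVO (show (⟨x, hxZ⟩ : Z) ∈ _ from hxU)⟩

lemma exists_isOpen_superset_isCompact_inter (hY : IsClosed Y) {Z : Set α} (hZ : IsCompact Z)
    (hZY : Z ⊆ Y) (hc : ∀ z ∈ Z, IsCompact (connectedComponentIn Y z)) :
    ∃ U : Set α, IsOpen U ∧ Z ⊆ U ∧ IsCompact (Y ∩ U) := by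
  refine hZ.induction_on (p := fun s => ∃ U : Set α, IsOpen U ∧ s ⊆ U ∧ IsCompact (Y ∩ U))
    ⟨∅, isOpen_empty, le_rfl, by simp⟩ ?_ ?_ fun z hz => ?_
  · rintro s t hst ⟨U, hU, htU, hYU⟩
    exact ⟨U, hU, hst.trans htU, hYU⟩
  · rintro s t ⟨U, hU, hsU, hYU⟩ ⟨V, hV, htV, hYV⟩
    exact ⟨U ∪ V, hU.union hV, union_subset_union hsU htV,
      inter_union_distrib_left Y U V ▸ hYU.union hYV⟩
  · obtain ⟨U, hU, hzU, hYU⟩ := exists_isOpen_mem_isCompact_inter hY (hZY hz) (hc z hz)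
    exact ⟨U, mem_nhdsWithin_of_mem_nhds (hU.mem_nhds hzU), U, hU, le_rfl, hYU⟩

end ComponentNeighbourhoods

section HatSet

variable {X : Set ℂ}

lemma re_neg_of_mem_hatSet (hX : X ⊆ ball 0 1) {z : ℂ} (hz : z ∈ hatSet X) : z.re < 0 := by
  have hnorm := hX hz.1
  rwa [mem_ball_zero_iff, Complex.norm_exp, Real.exp_lt_one_iff] at hnorm

lemma one_sub_div_mem_slitPlane {z w : ℂ} (h : ‖z‖ < ‖w‖) : 1 - z / w ∈ Complex.slitPlane := by
  rw [sub_eq_add_neg]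
  refine Complex.mem_slitPlane_of_norm_lt_one ?_
  rw [norm_neg, norm_div]
  exact (div_lt_one ((norm_nonneg z).trans_lt h)).2 h

/- Choose `w ∉ X` near `0` and `R` outside a ball containing `X`. Then `x = (x - w) / (1 - w / x)`
and `x - R = -R (1 - x / R)`, while `(x - w) / (x - R)` has a logarithm on `X`. -/
lemma exists_continuousOn_exp_eq_self (hX : IsCompact X) (hXns : IsPreconnected Xᶜ)
    (h0 : (0 : ℂ) ∈ frontier X) {r : ℝ} (hr : 0 < r) :
    ∃ F : ℂ → ℂ, ContinuousOn F (X ∩ {x | r ≤ ‖x‖}) ∧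
      ∀ x ∈ X ∩ {x | r ≤ ‖x‖}, Complex.exp (F x) = x := by
  have h0' : (0 : ℂ) ∈ closure Xᶜ := (frontier_eq_closure_inter_closure (s := X) ▸ h0).2
  obtain ⟨w, hwX, hw⟩ := Metric.mem_closure_iff.1 h0' r hr
  rw [dist_comm, dist_zero_right] at hw
  obtain ⟨R, hR, hXR⟩ := hX.isBounded.subset_ball_lt 0 0
  have hnormR : ‖(R : ℂ)‖ = R := Complex.norm_of_nonneg hR.le
  have hRX : (R : ℂ) ∈ Xᶜ := fun h => (mem_ball_zero_iff.1 (hXR h)).ne hnormR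
  obtain ⟨L, hL, hLexp⟩ := exists_log_div_sub hXns hX.isClosed disjoint_compl_right hwX hRX
  have hx₀ : ∀ x ∈ X ∩ {x | r ≤ ‖x‖}, x ≠ 0 := fun x hx => norm_pos_iff.1 (hr.trans_le hx.2)
  have hslitR : ∀ x ∈ X ∩ {x | r ≤ ‖x‖}, 1 - x / R ∈ Complex.slitPlane := fun x hx =>
    one_sub_div_mem_slitPlane (by simpa only [hnormR] using mem_ball_zero_iff.1 (hXR hx.1))
  have hslitw : ∀ x ∈ X ∩ {x | r ≤ ‖x‖}, 1 - w / x ∈ Complex.slitPlane := fun x hx =>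
    one_sub_div_mem_slitPlane (hw.trans_le hx.2)
  have hcont : ContinuousOn (fun x => 1 - w / x) (X ∩ {x | r ≤ ‖x‖}) :=
    continuousOn_const.sub (continuousOn_const.div continuousOn_id hx₀)
  have hR₀ : (R : ℂ) ≠ 0 := Complex.ofReal_ne_zero.2 hR.ne'
  refine ⟨fun x => L x + Complex.log (1 - x / R) - Complex.log (1 - w / x) + Complex.log (-R),
    (((hL.mono inter_subset_left).add (ContinuousOn.clog (by fun_prop) hslitR)).sub
      (hcont.clog hslitw)).add continuousOn_const, fun x hx => ?_⟩
  have hslitw₀ := Complex.slitPlane_ne_zero (hslitw x hx)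
  rw [Complex.exp_add, Complex.exp_sub, Complex.exp_add,
    Complex.exp_log (Complex.slitPlane_ne_zero (hslitR x hx)), Complex.exp_log hslitw₀,
    Complex.exp_log (neg_ne_zero.2 hR₀), div_mul_eq_mul_div, div_eq_iff hslitw₀]
  have hxw : x * (1 - w / x) = x - w := by rw [mul_sub, mul_one, mul_div_cancel₀ w (hx₀ x hx)]
  rw [hxw, ← hLexp x hx.1]
  field_simp
  ring

lemma isBounded_of_isPreconnected_of_subset_hatSet (hX : IsCompact X) (hXns : IsPreconnected Xᶜ)
    (h0 : (0 : ℂ) ∈ frontier X) {P : Set ℂ} (hPX : P ⊆ hatSet X) (hP : IsPreconnected P) {m : ℝ}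
    (hm : ∀ z ∈ P, m ≤ z.re) : Bornology.IsBounded P := by
  rcases P.eq_empty_or_nonempty with rfl | ⟨p, hp⟩
  · exact Bornology.isBounded_empty
  obtain ⟨F, hF, hFexp⟩ := exists_continuousOn_exp_eq_self hX hXns h0 (Real.exp_pos m)
  set K : Set ℂ := X ∩ {x | Real.exp m ≤ ‖x‖}
  have hK : IsCompact K := hX.inter_right (isClosed_le continuous_const continuous_norm)
  have hPK : MapsTo Complex.exp P K := fun z hz =>
    ⟨(hPX hz).1, (Real.exp_le_exp.2 (hm z hz)).trans (Complex.norm_exp z).ge⟩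
  set G : ℂ → ℂ := fun x => F x + (p - F (Complex.exp p))
  have hG : ContinuousOn G K := hF.add continuousOn_const
  have hid : EqOn id (G ∘ Complex.exp) P := by
    refine eqOn_of_exp_eq hP continuousOn_id (hG.comp Complex.continuous_exp.continuousOn hPK)
      (fun z hz => ?_) hp (by simp [G])
    rw [Function.comp_apply, Complex.exp_add, Complex.exp_sub, hFexp _ (hPK hz),
      hFexp _ (hPK hp), div_self (Complex.exp_ne_zero _), mul_one, id]
  exact (hK.image_of_continuousOn hG).isBounded.subset fun z hz =>
    ⟨Complex.exp z, hPK hz, (hid hz).symm⟩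

/- Otherwise `A` has a compact relatively open piece; its image under `exp` would be a
proper clopen part of `X`. -/
lemma not_isCompact_connectedComponentIn_of_hatSet_eq (hX : IsPreconnected X) (h0 : (0 : ℂ) ∈ X)
    {A B : Set ℂ} (hAB : hatSet X = A ∪ B) (hdisj : Disjoint A B) (hA : IsClosed A)
    (hB : IsClosed B) {a : ℂ} (ha : a ∈ A) : ¬ IsCompact (connectedComponentIn A a) := by
  intro hcomp
  obtain ⟨U, hU, haU, hAU⟩ := exists_isOpen_mem_isCompact_inter hA ha hcomp
  have hsub : A ∩ U ⊆ U \ B := fun z hz => ⟨hz.2, disjoint_left.1 hdisj hz.1⟩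
  have hopen : IsOpen (Complex.exp '' (U \ B)) := Complex.isOpenMap_exp _ (hU.sdiff hB)
  have hclosed : IsClosed (Complex.exp '' (A ∩ U)) := (hAU.image Complex.continuous_exp).isClosed
  have hmem : ∀ x ∈ X, x ∈ Complex.exp '' (U \ B) → x ∈ Complex.exp '' (A ∩ U) := by
    rintro _ hx ⟨z, hz, rfl⟩
    have hzAB : z ∈ A ∪ B := hAB ▸ ⟨hx, Complex.exp_ne_zero z⟩
    exact ⟨z, ⟨hzAB.resolve_right hz.2, hz.1⟩, rfl⟩
  have hcover : X ⊆ Complex.exp '' (U \ B) ∪ (Complex.exp '' (A ∩ U))ᶜ := fun x _ =>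
    (em (x ∈ Complex.exp '' (A ∩ U))).imp (fun h => image_mono hsub h) id
  have haX : a ∈ hatSet X := hAB ▸ Or.inl ha
  obtain ⟨x, hxX, hx, hx'⟩ := hX _ _ hopen hclosed.isOpen_compl hcover
    ⟨_, haX.1, a, hsub ⟨ha, haU⟩, rfl⟩ ⟨0, h0, fun ⟨z, _, hz⟩ => Complex.exp_ne_zero z hz⟩
  exact hx' (hmem x hxX hx)

lemma exists_mem_re_eq {C : Set ℂ} (hC : IsPreconnected C) (hleft : ∀ m : ℝ, ∃ z ∈ C, z.re < m)
    {c : ℂ} (hc : c ∈ C) {x : ℝ} (hx : x ≤ c.re) : ∃ z ∈ C, z.re = x := by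
  obtain ⟨z, hz, hzx⟩ := hleft x
  exact hC.intermediate_value hz hc Complex.continuous_re.continuousOn ⟨hzx.le, hx⟩

lemma exists_dist_le_of_subset_hatSet {C : Set ℂ} (hC : IsPreconnected C) (hCne : C.Nonempty)
    (hleft : ∀ m : ℝ, ∃ z ∈ C, z.re < m) (hCX : C ⊆ hatSet X) (x₀ : ℝ) :
    ∃ κ : ℝ, ∀ z : ℂ, z.re ≤ x₀ → ∃ x ∈ hatSet X, dist z x ≤ κ := by
  obtain ⟨a, ha⟩ := hCne
  refine ⟨|x₀ - a.re| + Real.pi, fun z hz => ?_⟩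
  obtain ⟨c, hc, hcre⟩ := exists_mem_re_eq hC hleft ha (min_le_right z.re a.re)
  set n : ℤ := round ((z.im - c.im) / (2 * Real.pi))
  refine ⟨c + n * (2 * Real.pi * Complex.I), ?_, ?_⟩
  · rw [hatSet, mem_preimage, Complex.exp_add, Complex.exp_int_mul_two_pi_mul_I, mul_one]
    exact hCX hc
  rw [Complex.dist_eq]
  refine (Complex.norm_le_abs_re_add_abs_im _).trans (add_le_add ?_ ?_)
  · have hre : (z - (c + n * (2 * Real.pi * Complex.I))).re = z.re - min z.re a.re := by
      simp [hcre]
    rw [hre, abs_of_nonneg (sub_nonneg.2 (min_le_left _ _))]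
    rcases le_total z.re a.re with h | h
    · simp [min_eq_left h]
    · rw [min_eq_right h]
      exact (sub_le_sub_right hz _).trans (le_abs_self _)
  · have hround := abs_sub_round ((z.im - c.im) / (2 * Real.pi))
    have him : (z - (c + n * (2 * Real.pi * Complex.I))).im =
        ((z.im - c.im) / (2 * Real.pi) - n) * (2 * Real.pi) := by
      rw [sub_mul, div_mul_cancel₀ _ Real.two_pi_pos.ne']
      simp [sub_add_eq_sub_sub]
    rw [him, abs_mul, abs_of_pos Real.two_pi_pos]
    nlinarith [Real.pi_pos]

end HatSet

/-! ### The order relation in terms of logarithms -/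

section Sign

variable {σ : ℝ}

lemma mul_self_of_sign (hσ : σ = 1 ∨ σ = -1) : σ * σ = 1 := by
  rcases hσ with rfl | rfl <;> norm_num

lemma abs_sign_mul (hσ : σ = 1 ∨ σ = -1) (x : ℝ) : |σ * x| = |x| := by
  rcases hσ with rfl | rfl <;> simp

lemma cos_sign_mul (hσ : σ = 1 ∨ σ = -1) (x : ℝ) : Real.cos (σ * x) = Real.cos x := by
  rcases hσ with rfl | rfl <;> simp

lemma sin_sign_mul (hσ : σ = 1 ∨ σ = -1) (x : ℝ) : Real.sin (σ * x) = σ * Real.sin x := by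
  rcases hσ with rfl | rfl <;> simp

lemma cos_sign_mul_im_neg (hσ : σ = 1 ∨ σ = -1) {w : ℂ} (hw : (Complex.exp w).re < 0) :
    Real.cos (σ * w.im) < 0 := by
  rw [Complex.exp_re] at hw
  rw [cos_sign_mul hσ]
  exact neg_of_mul_neg_right hw (Real.exp_pos _).le

lemma sign_mul_im_ne (hσ : σ = 1 ∨ σ = -1) {w : ℂ} (hw : (Complex.exp w).re < 0) :
    σ * w.im ≠ -(Real.pi / 2) := by
  intro h
  have hcos := cos_sign_mul_im_neg hσ hw
  rw [h, Real.cos_neg, Real.cos_pi_div_two] at hcos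
  exact lt_irrefl _ hcos

lemma sin_sign_mul_im_neg (hσ : σ = 1 ∨ σ = -1) {w : ℂ} (hw : σ * (Complex.exp w).im < 0) :
    Real.sin (σ * w.im) < 0 := by
  rw [Complex.exp_im, mul_left_comm] at hw
  rw [sin_sign_mul hσ]
  exact neg_of_mul_neg_right hw (Real.exp_pos _).le

end Sign

lemma exists_forall_re_mem_Ioo {K : Set ℂ} (hK : IsCompact K) :
    ∃ m M : ℝ, ∀ z ∈ K, z.re ∈ Ioo m M := by
  obtain ⟨m, hm⟩ := (hK.image Complex.continuous_re).bddBelow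
  obtain ⟨M, hM⟩ := (hK.image Complex.continuous_re).bddAbove
  refine ⟨m - 1, M + 1, fun z hz => ⟨?_, ?_⟩⟩
  · linarith [hm (mem_image_of_mem _ hz)]
  · linarith [hM (mem_image_of_mem _ hz)]

namespace IsLeftTail

variable {S : Set ℂ} {ρ σ : ℝ}

lemma union {ρ' : ℝ} (h : IsLeftTail S ρ) (hρ : ρ ≤ ρ') {K : Set ℂ} (hKcl : IsClosed K)
    (hK : IsPreconnected K) (hSK : (S ∩ K).Nonempty) (hKlt : ∀ z ∈ K, z.re < ρ') :
    IsLeftTail (S ∪ K) ρ' where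
  isClosed := h.isClosed.union hKcl
  isPreconnected := h.isPreconnected.union' hSK hK
  re_lt := by
    rintro z (hz | hz)
    exacts [(h.re_lt z hz).trans_le hρ, hKlt z hz]
  exists_re_lt m := (h.exists_re_lt m).imp fun _ hz => ⟨Or.inl hz.1, hz.2⟩

lemma mul_im_logBranch_mem_Ioo (h : IsLeftTail S ρ) (hσ : σ = 1 ∨ σ = -1) {T : ℂ} (hT : T ∈ S)
    {P : Set ℂ} (hP : IsPreconnected P) (hPS : P ⊆ Sᶜ) {r : ℂ} (hr : r ∈ P) (hρr : ρ ≤ r.re)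
    (him : ∀ z ∈ P, σ * (z - T).im < 0) :
    ∀ z ∈ P, σ * (logBranch S ρ T z).im ∈ Ioo (-Real.pi) 0 := by
  have hPdom : P ⊆ rightDomain S ρ := subset_rightDomain hP hPS hr (h.mem_rightDomain hρr)
  have hsin : ∀ z ∈ P, Real.sin (σ * (logBranch S ρ T z).im) < 0 := fun z hz =>
    sin_sign_mul_im_neg hσ (by rw [h.exp_logBranch hT (hPdom hz)]; exact him z hz)
  have hne : ∀ x : ℝ, Real.sin x = 0 → ∀ z ∈ P, σ * (logBranch S ρ T z).im ≠ x :=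
    fun x hx z hz hzx => (hsin z hz).ne (hzx ▸ hx)
  have hpi := hne (-Real.pi) (by simp)
  refine forall_mem_Ioo_of_forall_ne hP
    (continuousOn_const.mul ((h.continuousOn_im_logBranch hT).mono hPdom))
    hpi (hne 0 Real.sin_zero) hr ?_
  have habs : |σ * (logBranch S ρ T r).im| ≤ Real.pi := by
    rw [abs_sign_mul hσ, h.logBranch_eq_log hT hρr, Complex.log_im]
    exact Complex.abs_arg_le_pi _
  refine ⟨(abs_le.1 habs).1.lt_of_ne (hpi r hr).symm, ?_⟩
  by_contra! hge
  exact (hsin r hr).not_ge (Real.sin_nonneg_of_nonneg_of_le_pi hge (abs_le.1 habs).2)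

lemma mul_im_logBranch_lt (h : IsLeftTail S ρ) (hσ : σ = 1 ∨ σ = -1) {T : ℂ} (hT : T ∈ S)
    {P₁ P₂ : Set ℂ} (hP₁ : IsPreconnected P₁) (hP₁S : P₁ ⊆ Sᶜ) (hP₂ : IsPreconnected P₂)
    (hP₂S : P₂ ⊆ Sᶜ) {r q : ℂ} (hr : r ∈ P₁) (hρr : ρ ≤ r.re) (hq₁ : q ∈ P₁) (hq₂ : q ∈ P₂)
    (him : ∀ z ∈ P₁, σ * (z - T).im < 0) (hre : ∀ z ∈ P₂, z.re < T.re) :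
    P₂ ⊆ rightDomain S ρ ∧ ∀ z ∈ P₂, σ * (logBranch S ρ T z).im < -(Real.pi / 2) := by
  have hqdom : q ∈ rightDomain S ρ := subset_rightDomain hP₁ hP₁S hr (h.mem_rightDomain hρr) hq₁
  have hP₂dom : P₂ ⊆ rightDomain S ρ := subset_rightDomain hP₂ hP₂S hq₂ hqdom
  have hexp : ∀ z ∈ P₂, (Complex.exp (logBranch S ρ T z)).re < 0 := fun z hz => by
    rw [h.exp_logBranch hT (hP₂dom hz), Complex.sub_re]
    exact sub_neg.2 (hre z hz)
  refine ⟨hP₂dom, forall_lt_of_forall_ne hP₂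
    (continuousOn_const.mul ((h.continuousOn_im_logBranch hT).mono hP₂dom))
    (fun z hz => sign_mul_im_ne hσ (hexp z hz)) hq₂ ?_⟩
  by_contra! hge
  have hq := h.mul_im_logBranch_mem_Ioo hσ hT hP₁ hP₁S hr hρr him q hq₁
  refine (cos_sign_mul_im_neg hσ (hexp q hq₂)).not_ge (Real.cos_nonneg_of_mem_Icc ⟨hge, ?_⟩)
  linarith [hq.2, Real.pi_pos]

lemma mul_im_logBranch_lt_of_base (h : IsLeftTail S ρ) (hσ : σ = 1 ∨ σ = -1) {K : Set ℂ}
    (hK : IsPreconnected K) (hKS : K ⊆ S) {e : ℂ} (he : e ∈ rightDomain S ρ)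
    (hlt : ∀ z ∈ K, e.re < z.re) {p q : ℂ} (hp : p ∈ K) (hq : q ∈ K)
    (hpe : σ * (logBranch S ρ p e).im < -(Real.pi / 2)) :
    σ * (logBranch S ρ q e).im < -(Real.pi / 2) := by
  refine forall_lt_of_forall_ne hK (φ := fun c => σ * (logBranch S ρ c e).im)
    (continuousOn_const.mul (Complex.continuous_im.comp_continuousOn
      ((h.continuousOn_logBranch_base he).mono hKS)))
    (fun z hz => sign_mul_im_ne hσ ?_) hp hpe q hq
  rw [h.exp_logBranch (hKS hz) he, Complex.sub_re]
  exact sub_neg.2 (hlt z hz)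

end IsLeftTail

/-- `D` is to the right of the left tail `C`, and far to the left the branch of the argument of
`d - c` is below `-π/2` on `D` (`σ = 1`: `D` runs below `C`) or above `π/2` (`σ = -1`: `D` runs
above `C`). -/
def EventuallyBelow (σ : ℝ) (C : Set ℂ) (c : ℂ) (D : Set ℂ) : Prop :=
  D ⊆ rightDomain C 0 ∧
    ∃ m : ℝ, ∀ d ∈ D, d.re < m → σ * (logBranch C 0 c d).im < -(Real.pi / 2)

/- The branch is first controlled at the base point `T`, then the base point is moved to `c` along
`K`, which lies far to the right of the points under consideration. -/
lemma eventuallyBelow_of_union {C K D P₁ P₂ : Set ℂ} {σ ρ : ℝ} (hσ : σ = 1 ∨ σ = -1)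
    (hC : IsLeftTail C 0) (hCK : IsLeftTail (C ∪ K) ρ) (hKc : IsCompact K)
    (hK : IsPreconnected K) {c T : ℂ} (hc : c ∈ C) (hcK : c ∈ K) (hT : T ∈ K)
    (hP₁ : IsPreconnected P₁) (hP₁S : P₁ ⊆ (C ∪ K)ᶜ) (hP₂ : IsPreconnected P₂)
    (hP₂S : P₂ ⊆ (C ∪ K)ᶜ) {r q : ℂ} (hr : r ∈ P₁) (hρr : ρ ≤ r.re) (hq₁ : q ∈ P₁)
    (hq₂ : q ∈ P₂) (him : ∀ z ∈ P₁, σ * (z - T).im < 0) (hre : ∀ z ∈ P₂, z.re < T.re)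
    (hD : D ⊆ P₂) : EventuallyBelow σ C c D := by
  obtain ⟨hdom, hlt⟩ := hCK.mul_im_logBranch_lt hσ (Or.inr hT) hP₁ hP₁S hP₂ hP₂S hr hρr hq₁ hq₂
    him hre
  obtain ⟨m, M, hm⟩ := exists_forall_re_mem_Ioo hKc
  refine ⟨hD.trans (hdom.trans (hC.rightDomain_anti hCK subset_union_left)), m,
    fun d hd hdm => ?_⟩
  rw [hC.logBranch_eq_of_subset hCK subset_union_left hc (hdom (hD hd))]
  exact hCK.mul_im_logBranch_lt_of_base hσ hK subset_union_right (hdom (hD hd))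
    (fun z hz => hdm.trans (hm z hz).1) hT hcK (hlt d (hD hd))

lemma isClosed_ofReal_image_Ici : IsClosed (Complex.ofReal '' Ici (0 : ℝ)) :=
  Complex.isometry_ofReal.isClosedEmbedding.isClosedMap _ isClosed_Ici

lemma isPreconnected_ofReal_image {s : Set ℝ} (hs : IsPreconnected s) :
    IsPreconnected (Complex.ofReal '' s) :=
  hs.image _ Complex.continuous_ofReal.continuousOn

namespace IsLeftTail

lemma exists_isCompact_joining {D E Γ : Set ℂ} (hD : IsLeftTail D 0) (hE : IsClosed E)
    (hΓ : IsCompact Γ ∧ IsPreconnected Γ ∧ (∀ z ∈ Γ, z.re ≤ 0) ∧ (D ∩ Γ).Nonempty ∧ 0 ∈ Γ)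
    (hED : E ⊆ (D ∪ (Γ ∪ Complex.ofReal '' Ici 0))ᶜ) {d : ℂ} (hd : d ∈ D) {N : ℝ} (hN : 0 ≤ N) :
    ∃ Q : Set ℂ, IsCompact Q ∧ IsPreconnected Q ∧ d ∈ Q ∧ (N : ℂ) ∈ Q ∧ E ⊆ (D ∪ Q)ᶜ ∧
      ∀ z ∈ D ∪ Q, z.re ≤ 0 ∨ z.re ≤ N ∧ z.im = 0 := by
  obtain ⟨hΓc, hΓ, hΓre, ⟨d', hd'D, hd'Γ⟩, h0Γ⟩ := hΓ
  have hDneg : D ⊆ {z : ℂ | z.re < 0} ∩ Eᶜ := fun z hz =>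
    ⟨hD.re_lt z hz, fun h => hED h (Or.inl hz)⟩
  obtain ⟨L, hLO, hLc, hL, hdL, hd'L⟩ := exists_isCompact_isPreconnected_of_subset_isOpen
    hD.isPreconnected ((isOpen_lt Complex.continuous_re continuous_const).inter hE.isOpen_compl)
    hDneg hd hd'D
  refine ⟨L ∪ Γ ∪ Complex.ofReal '' Icc 0 N,
    (hLc.union hΓc).union (isCompact_Icc.image Complex.continuous_ofReal),
    (hL.union d' hd'L hd'Γ hΓ).union 0 (Or.inr h0Γ) ⟨0, ⟨le_rfl, hN⟩, by simp⟩
      (isPreconnected_ofReal_image isPreconnected_Icc),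
    Or.inl (Or.inl hdL), Or.inr ⟨N, ⟨hN, le_rfl⟩, rfl⟩, ?_, ?_⟩
  · rintro z hz (hzD | (hzL | hzΓ) | ⟨t, ht, rfl⟩)
    exacts [hED hz (Or.inl hzD), (hLO hzL).2 hz, hED hz (Or.inr (Or.inl hzΓ)),
      hED hz (Or.inr (Or.inr ⟨t, ht.1, rfl⟩))]
  · rintro z (hz | (hz | hz) | ⟨t, ht, rfl⟩)
    exacts [Or.inl (hD.re_lt z hz).le, Or.inl (hLO hz).1.le, Or.inl (hΓre z hz),
      Or.inr ⟨ht.2, Complex.ofReal_im t⟩]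

end IsLeftTail

namespace LiesAbove

variable {C D : Set ℂ}

lemma exists_joining (h : LiesAbove C D) (hD : IsClosed D) {c : ℂ} (hc : c ∈ C) :
    ∃ Γ J : Set ℂ, (IsCompact Γ ∧ IsPreconnected Γ ∧ (∀ z ∈ Γ, z.re ≤ 0) ∧ (D ∩ Γ).Nonempty ∧
        0 ∈ Γ) ∧
      (IsCompact J ∧ IsPreconnected J ∧ c ∈ J ∧ 1 + 2 * (Real.pi : ℂ) * Complex.I ∈ J) ∧
      C ∪ J ⊆ (D ∪ (Γ ∪ Complex.ofReal '' Ici 0))ᶜ := by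
  obtain ⟨s, ⟨hs, hsC, hs0, hs1⟩, -, hCG⟩ := h
  have hΓ : IsCompact (s '' Icc 0 1) := isCompact_Icc.image_of_continuousOn hs
  have hclosed : IsClosed (D ∪ AboveRay s) :=
    hD.union (hΓ.isClosed.union isClosed_ofReal_image_Ici)
  have hT := mem_connectedComponentIn (connectedComponentIn_nonempty_iff.1 ⟨c, hCG hc⟩)
  obtain ⟨J, hJO, hJc, hJ, hcJ, hTJ⟩ := exists_isCompact_isPreconnected_of_subset_isOpen
    isPreconnected_connectedComponentIn hclosed.isOpen_compl (connectedComponentIn_subset _ _)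
    (hCG hc) hT
  refine ⟨s '' Icc 0 1, J, ⟨hΓ, isPreconnected_Icc.image _ hs, ?_, ⟨s 0, hs0, 0, by simp, rfl⟩,
    1, by simp, hs1⟩, ⟨hJc, hJ, hcJ, hTJ⟩,
    union_subset (hCG.trans (connectedComponentIn_subset _ _)) hJO⟩
  rintro _ ⟨u, hu, rfl⟩
  exact (hsC u hu).1

lemma eventuallyBelow_right (h : LiesAbove C D) (hC : IsLeftTail C 0) (hD : IsLeftTail D 0)
    {c : ℂ} (hc : c ∈ C) : EventuallyBelow 1 C c D := by
  obtain ⟨Γ, J, ⟨-, hΓ, hΓre, hDΓ, h0Γ⟩, ⟨hJc, hJ, hcJ, hTJ⟩, hCJ⟩ :=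
    h.exists_joining hD.isClosed hc
  have hdisj := subset_compl_comm.1 hCJ
  obtain ⟨m, M, hM⟩ := exists_forall_re_mem_Ioo hJc
  have hCJtail : IsLeftTail (C ∪ J) (max M 0) := hC.union (le_max_right _ _) hJc.isClosed hJ
    ⟨c, hc, hcJ⟩ fun z hz => (hM z hz).2.trans_le (le_max_left _ _)
  refine eventuallyBelow_of_union (Or.inl rfl) hC hCJtail hJc hJ hc hcJ hTJ
    (P₁ := Complex.ofReal '' Ici 0) (P₂ := D ∪ Γ) (r := ((max M 0 : ℝ) : ℂ)) (q := 0)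
    (isPreconnected_ofReal_image isPreconnected_Ici) (fun z hz => hdisj (Or.inr (Or.inr hz)))
    (hD.isPreconnected.union' hDΓ hΓ) (fun z hz => hdisj (hz.imp_right Or.inl))
    ⟨_, mem_Ici.2 (le_max_right _ _), rfl⟩ (by simp) ⟨0, by simp⟩ (Or.inr h0Γ) ?_ ?_
    subset_union_left
  · rintro _ ⟨t, -, rfl⟩
    simpa using Real.pi_pos
  · have hneg : ∀ z ∈ D ∪ Γ, z.re ≤ 0 := fun z hz => hz.elim (fun h => (hD.re_lt z h).le) (hΓre z)
    intro z hz
    simpa using (hneg z hz).trans_lt one_pos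

lemma eventuallyBelow_left (h : LiesAbove C D) (hC : IsLeftTail C 0) (hD : IsLeftTail D 0)
    (hCne : C.Nonempty) {d : ℂ} (hd : d ∈ D) : EventuallyBelow (-1) D d C := by
  obtain ⟨c, hc⟩ := hCne
  obtain ⟨Γ, J, hΓ, ⟨hJc, hJ, hcJ, hTJ⟩, hCJ⟩ := h.exists_joining hD.isClosed hc
  obtain ⟨m, M, hM⟩ := exists_forall_re_mem_Ioo hJc
  have hN : 0 ≤ max M 0 := le_max_right _ _
  obtain ⟨Q, hQc, hQ, hdQ, hNQ, hCJQ, hre⟩ := hD.exists_isCompact_joining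
    (hC.isClosed.union hJc.isClosed) hΓ hCJ hd hN
  have hTail : IsLeftTail (D ∪ Q) (max M 0 + 1) := by
    refine hD.union (by linarith) hQc.isClosed hQ ⟨d, hd, hdQ⟩ fun z hz => ?_
    rcases hre z (Or.inr hz) with hz | ⟨hz, -⟩ <;> linarith
  set T : ℂ := 1 + 2 * (Real.pi : ℂ) * Complex.I
  have hTre (t : ℝ) : (T + t).re = 1 + t := by simp [T]
  have hTim (t : ℝ) : (T + t).im = 2 * Real.pi := by simp [T]
  refine eventuallyBelow_of_union (Or.inr rfl) hD hTail hQc hQ hd hdQ hNQ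
    (P₁ := (fun t : ℝ => T + t) '' Ici 0) (P₂ := C ∪ J) (r := T + (max M 0 : ℝ)) (q := T)
    (isPreconnected_Ici.image _ (by fun_prop)) ?_ (hC.isPreconnected.union c hc hcJ hJ) hCJQ
    ⟨max M 0, mem_Ici.2 hN, rfl⟩ (by rw [hTre, add_comm]) ⟨0, by simp⟩ (Or.inr hTJ) ?_ ?_
    subset_union_left
  · rintro _ ⟨t, ht, rfl⟩ hz
    rcases hre _ hz with hz | ⟨-, hz⟩
    · rw [hTre] at hz
      linarith [mem_Ici.1 ht]
    · exact Real.two_pi_pos.ne' ((hTim t).symm.trans hz)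
  · rintro _ ⟨t, -, rfl⟩
    rw [Complex.sub_im, Complex.ofReal_im, hTim]
    linarith [Real.pi_pos]
  · rintro z (hz | hz)
    · exact (hC.re_lt z hz).trans_le (le_max_right _ _)
    · exact (hM z hz).2.trans_le (le_max_left _ _)

end LiesAbove

/-! ### Pairs of sets with one above the other -/

section SignSplitting

variable {α : Type*} [TopologicalSpace α] [T2Space α] [LocallyCompactSpace α]

/- The zero set of `ψ` has a neighbourhood `U` meeting `{0 ≤ ψ}` in a compact set, and a component
of `B` through a point of `{0 ≤ ψ}` outside `U` could not reach `{ψ ≤ 0}`. -/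
lemma isCompact_inter_preimage_Ici {B : Set α} (hB : IsClosed B) {ψ : α → ℝ}
    (hψ : ContinuousOn ψ B) (hzero : IsCompact (B ∩ ψ ⁻¹' {0}))
    (hcomp : ∀ b ∈ B ∩ ψ ⁻¹' {0}, IsCompact (connectedComponentIn (B ∩ ψ ⁻¹' Ici 0) b))
    (hle : ∀ b ∈ B, ∃ z ∈ connectedComponentIn B b, ψ z ≤ 0) : IsCompact (B ∩ ψ ⁻¹' Ici 0) := by
  have hup : IsClosed (B ∩ ψ ⁻¹' Ici 0) := hψ.preimage_isClosed_of_isClosed hB isClosed_Ici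
  have hdown : IsClosed (B ∩ ψ ⁻¹' Iic 0) := hψ.preimage_isClosed_of_isClosed hB isClosed_Iic
  obtain ⟨U, hU, hzU, hUc⟩ := exists_isOpen_superset_isCompact_inter hup hzero
    (inter_subset_inter_right B (preimage_mono (singleton_subset_iff.2 self_mem_Ici))) hcomp
  suffices hsub : B ∩ ψ ⁻¹' Ici 0 ⊆ U by rwa [inter_eq_left.2 hsub] at hUc
  intro b hb
  by_contra hbU
  obtain ⟨z, hz, hzle⟩ := hle b hb.1
  have hzB : z ∈ B := connectedComponentIn_subset _ _ hz
  have hcover : connectedComponentIn B b ⊆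
      (B ∩ ψ ⁻¹' Ici 0) \ U ∪ ((B ∩ ψ ⁻¹' Iic 0) ∪ (B ∩ ψ ⁻¹' Ici 0 ∩ U)) := by
    intro x hx
    have hxB : x ∈ B := connectedComponentIn_subset _ _ hx
    rcases le_total (ψ x) 0 with h0 | h0
    · exact Or.inr (Or.inl ⟨hxB, h0⟩)
    · by_cases hxU : x ∈ U
      exacts [Or.inr (Or.inr ⟨⟨hxB, h0⟩, hxU⟩), Or.inl ⟨⟨hxB, h0⟩, hxU⟩]
  obtain ⟨x, -, ⟨hx, hxU⟩, hx' | hx'⟩ := isPreconnected_closed_iff.1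
    isPreconnected_connectedComponentIn _ _ (hup.sdiff hU) (hdown.union hUc.isClosed) hcover
    ⟨b, mem_connectedComponentIn hb.1, hb, hbU⟩ ⟨z, hz, Or.inl ⟨hzB, hzle⟩⟩
  · exact hxU (hzU ⟨hx.1, le_antisymm hx'.2 hx.2⟩)
  · exact hxU hx'.2

end SignSplitting

/-- The properties of the two parts of `X̂` on which the argument rests: `A` and `B` are closed
disjoint unions of left tails, `A ∪ B` is coarsely dense in half-planes `re ≤ x₀`, and `A` runs
above `B` (`σ = 1`) or below `B` (`σ = -1`). The sign makes the notion symmetric in `A` and `B`. -/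
structure StackedPair (A B : Set ℂ) (σ : ℝ) : Prop where
  isClosed_left : IsClosed A
  isClosed_right : IsClosed B
  disjoint : Disjoint A B
  nonempty_left : A.Nonempty
  nonempty_right : B.Nonempty
  re_neg_left : ∀ z ∈ A, z.re < 0
  re_neg_right : ∀ z ∈ B, z.re < 0
  sign : σ = 1 ∨ σ = -1
  isBounded : ∀ P ⊆ A ∪ B, IsPreconnected P → ∀ m : ℝ, (∀ z ∈ P, m ≤ z.re) →
    Bornology.IsBounded P
  exists_re_lt_left : ∀ a ∈ A, ∀ m : ℝ, ∃ z ∈ connectedComponentIn A a, z.re < m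
  exists_re_lt_right : ∀ b ∈ B, ∀ m : ℝ, ∃ z ∈ connectedComponentIn B b, z.re < m
  exists_dist_le : ∀ x₀ : ℝ, ∃ κ : ℝ, ∀ z : ℂ, z.re ≤ x₀ → ∃ x ∈ A ∪ B, dist z x ≤ κ
  below : ∀ a ∈ A, ∀ b ∈ B,
    EventuallyBelow σ (connectedComponentIn A a) a (connectedComponentIn B b)
  above : ∀ a ∈ A, ∀ b ∈ B,
    EventuallyBelow (-σ) (connectedComponentIn B b) b (connectedComponentIn A a)

lemma isLeftTail_connectedComponentIn {A : Set ℂ} {ρ : ℝ} (hA : IsClosed A)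
    (hlt : ∀ z ∈ A, z.re < ρ) {a : ℂ} (hleft : ∀ m : ℝ, ∃ z ∈ connectedComponentIn A a, z.re < m) :
    IsLeftTail (connectedComponentIn A a) ρ :=
  ⟨isClosed_connectedComponentIn hA a, isPreconnected_connectedComponentIn,
    fun z hz => hlt z (connectedComponentIn_subset _ _ hz), hleft⟩

lemma connectedComponentIn_exists_re_lt {X : Set ℂ} (hX : IsCompact X) (hXc : IsPreconnected X)
    (hXns : IsPreconnected Xᶜ) (h0 : (0 : ℂ) ∈ frontier X) {A B : Set ℂ} (hAB : hatSet X = A ∪ B)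
    (hdisj : Disjoint A B) (hA : IsClosed A) (hB : IsClosed B) {a : ℂ} (ha : a ∈ A) (m : ℝ) :
    ∃ z ∈ connectedComponentIn A a, z.re < m := by
  by_contra! hm
  have hbdd := isBounded_of_isPreconnected_of_subset_hatSet hX hXns h0
    ((connectedComponentIn_subset _ _).trans (hAB ▸ subset_union_left))
    isPreconnected_connectedComponentIn hm
  exact not_isCompact_connectedComponentIn_of_hatSet_eq hXc (hX.isClosed.frontier_subset h0) hAB
    hdisj hA hB ha
    (Metric.isCompact_of_isClosed_isBounded (isClosed_connectedComponentIn hA a) hbdd)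

lemma stackedPair_of_liesAboveSets {X : Set ℂ} (hX : IsCompact X) (hXc : IsPreconnected X)
    (hXns : IsPreconnected Xᶜ) (h0 : (0 : ℂ) ∈ frontier X) (hXb : X ⊆ ball 0 1) {A B : Set ℂ}
    (hAB : hatSet X = A ∪ B) (hdisj : Disjoint A B) (hA : IsClosed A) (hB : IsClosed B)
    (hAne : A.Nonempty) (hBne : B.Nonempty) (habove : LiesAboveSets A B) : StackedPair A B 1 := by
  have hAneg : ∀ z ∈ A, z.re < 0 := fun z hz => re_neg_of_mem_hatSet hXb (hAB ▸ Or.inl hz)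
  have hBneg : ∀ z ∈ B, z.re < 0 := fun z hz => re_neg_of_mem_hatSet hXb (hAB ▸ Or.inr hz)
  have hAleft (a : ℂ) (ha : a ∈ A) :=
    connectedComponentIn_exists_re_lt hX hXc hXns h0 hAB hdisj hA hB ha
  have hBleft (b : ℂ) (hb : b ∈ B) := connectedComponentIn_exists_re_lt hX hXc hXns h0
    (hAB.trans (union_comm A B)) hdisj.symm hB hA hb
  have hAtail (a : ℂ) (ha : a ∈ A) := isLeftTail_connectedComponentIn hA hAneg (hAleft a ha)
  have hBtail (b : ℂ) (hb : b ∈ B) := isLeftTail_connectedComponentIn hB hBneg (hBleft b hb)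
  obtain ⟨a₀, ha₀⟩ := hAne
  exact
    { isClosed_left := hA
      isClosed_right := hB
      disjoint := hdisj
      nonempty_left := ⟨a₀, ha₀⟩
      nonempty_right := hBne
      re_neg_left := hAneg
      re_neg_right := hBneg
      sign := Or.inl rfl
      isBounded := fun P hP hPc m hm =>
        isBounded_of_isPreconnected_of_subset_hatSet hX hXns h0 (hAB ▸ hP) hPc hm
      exists_re_lt_left := hAleft
      exists_re_lt_right := hBleft
      exists_dist_le := hAB ▸ exists_dist_le_of_subset_hatSet isPreconnected_connectedComponentIn
        ⟨a₀, mem_connectedComponentIn ha₀⟩ (hAleft a₀ ha₀)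
        ((connectedComponentIn_subset _ _).trans (hAB ▸ subset_union_left))
      below := fun a ha b hb => (habove _ ⟨a, ha, rfl⟩ _ ⟨b, hb, rfl⟩).eventuallyBelow_right
        (hAtail a ha) (hBtail b hb) (mem_connectedComponentIn ha)
      above := fun a ha b hb => (habove _ ⟨a, ha, rfl⟩ _ ⟨b, hb, rfl⟩).eventuallyBelow_left
        (hAtail a ha) (hBtail b hb) ⟨a, mem_connectedComponentIn ha⟩ (mem_connectedComponentIn hb) }

lemma eq_norm_of_sign_mul_im_log_eq_zero {σ : ℝ} (hσ : σ = 1 ∨ σ = -1) {w u : ℂ}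
    (hexp : Complex.exp w = u) (hw : σ * w.im = 0) : u = (‖u‖ : ℝ) := by
  have him : w.im = 0 := by
    rcases hσ with rfl | rfl <;> simpa using hw
  have hre : w = (w.re : ℂ) := Complex.ext rfl (by simp [him])
  rw [← hexp, Complex.norm_exp, Complex.ofReal_exp, ← hre]

namespace StackedPair

variable {A B : Set ℂ} {σ : ℝ}

lemma symm (h : StackedPair A B σ) : StackedPair B A (-σ) where
  isClosed_left := h.isClosed_right
  isClosed_right := h.isClosed_left
  disjoint := h.disjoint.symm
  nonempty_left := h.nonempty_right
  nonempty_right := h.nonempty_left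
  re_neg_left := h.re_neg_right
  re_neg_right := h.re_neg_left
  sign := by rcases h.sign with rfl | rfl <;> simp
  isBounded P hP := h.isBounded P (union_comm B A ▸ hP)
  exists_re_lt_left := h.exists_re_lt_right
  exists_re_lt_right := h.exists_re_lt_left
  exists_dist_le := union_comm A B ▸ h.exists_dist_le
  below b hb a ha := h.above a ha b hb
  above b hb a ha := (neg_neg σ).symm ▸ h.below a ha b hb

lemma isLeftTail_left (h : StackedPair A B σ) {a : ℂ} (ha : a ∈ A) :
    IsLeftTail (connectedComponentIn A a) 0 :=
  isLeftTail_connectedComponentIn h.isClosed_left h.re_neg_left (h.exists_re_lt_left a ha)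

lemma right_subset_rightDomain (h : StackedPair A B σ) {a : ℂ} (ha : a ∈ A) :
    B ⊆ rightDomain (connectedComponentIn A a) 0 :=
  fun b hb => (h.below a ha b hb).1 (mem_connectedComponentIn hb)

lemma dist_le_of_sign_mul_im_logBranch_eq_zero (h : StackedPair A B σ) {a : ℂ} (ha : a ∈ A)
    {b : ℂ} (hb : b ∈ B) (h0 : σ * (logBranch (connectedComponentIn A a) 0 a b).im = 0) :
    dist b a ≤ -a.re := by
  have hexp := (h.isLeftTail_left ha).exp_logBranch (mem_connectedComponentIn ha)
    (h.right_subset_rightDomain ha hb)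
  have hre := congrArg Complex.re (eq_norm_of_sign_mul_im_log_eq_zero h.sign hexp h0)
  rw [Complex.sub_re, Complex.ofReal_re, ← Complex.dist_eq] at hre
  linarith [h.re_neg_right b hb]

lemma exists_dist_le_of_sign_mul_im_logBranch_nonneg (h : StackedPair A B σ) {a : ℂ} (ha : a ∈ A) :
    ∃ r : ℝ, ∀ b ∈ B, 0 ≤ σ * (logBranch (connectedComponentIn A a) 0 a b).im → dist b a ≤ r := by
  set ψ : ℂ → ℝ := fun e => σ * (logBranch (connectedComponentIn A a) 0 a e).im
  have hψ : ContinuousOn ψ B := continuousOn_const.mul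
    (((h.isLeftTail_left ha).continuousOn_im_logBranch (mem_connectedComponentIn ha)).mono
      (h.right_subset_rightDomain ha))
  have hfar : ∀ b ∈ B, ∃ m : ℝ, ∀ d ∈ connectedComponentIn B b, d.re < m → ψ d < 0 := by
    intro b hb
    obtain ⟨m, hm⟩ := (h.below a ha b hb).2
    exact ⟨m, fun d hd hdm => (hm d hd hdm).trans (neg_neg_of_pos Real.pi_div_two_pos)⟩
  have hup : IsClosed (B ∩ ψ ⁻¹' Ici 0) :=
    hψ.preimage_isClosed_of_isClosed h.isClosed_right isClosed_Ici
  have hzero : IsCompact (B ∩ ψ ⁻¹' {0}) := by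
    refine Metric.isCompact_of_isClosed_isBounded
      (hψ.preimage_isClosed_of_isClosed h.isClosed_right isClosed_singleton)
      ((isBounded_closedBall (x := a) (r := -a.re)).subset fun b hb => ?_)
    exact h.dist_le_of_sign_mul_im_logBranch_eq_zero ha hb.1 hb.2
  have hcomp : ∀ b ∈ B ∩ ψ ⁻¹' {0}, IsCompact (connectedComponentIn (B ∩ ψ ⁻¹' Ici 0) b) := by
    intro b hb
    obtain ⟨m, hm⟩ := hfar b hb.1
    refine Metric.isCompact_of_isClosed_isBounded (isClosed_connectedComponentIn hup b)
      (h.isBounded _ ((connectedComponentIn_subset _ _).trans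
        (inter_subset_left.trans subset_union_right)) isPreconnected_connectedComponentIn m ?_)
    intro z hz
    by_contra! hzm
    have hzψ : 0 ≤ ψ z := (connectedComponentIn_subset _ _ hz).2
    exact (hm z (connectedComponentIn_mono b inter_subset_left hz) hzm).not_ge hzψ
  have hle : ∀ b ∈ B, ∃ z ∈ connectedComponentIn B b, ψ z ≤ 0 := fun b hb =>
    let ⟨m, hm⟩ := hfar b hb
    let ⟨z, hz, hzm⟩ := h.exists_re_lt_right b hb m
    ⟨z, hz, (hm z hz hzm).le⟩
  obtain ⟨r, hr⟩ := (isCompact_inter_preimage_Ici h.isClosed_right hψ hzero hcomp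
    hle).isBounded.subset_closedBall a
  exact ⟨r, fun b hb hψb => hr ⟨hb, hψb⟩⟩

end StackedPair

/-! ### Connectedness of the open Voronoi region -/

/-- The open Voronoi region of `A` against `B`: the points strictly closer to `A` than to `B`. -/
def voronoiRegion (A B : Set ℂ) : Set ℂ := {z | infDist z A < infDist z B}

lemma isOpen_voronoiRegion {A B : Set ℂ} : IsOpen (voronoiRegion A B) :=
  isOpen_lt (continuous_infDist_pt A) (continuous_infDist_pt B)

section NearestPoint

variable {A : Set ℂ} {z a p : ℂ}

lemma infDist_eq_dist_of_mem_segment (ha : a ∈ A) (hd : infDist z A = dist z a)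
    (hp : p ∈ segment ℝ z a) : infDist p A = dist p a := by
  refine le_antisymm (infDist_le_dist_of_mem ha) ?_
  linarith [infDist_le_infDist_add_dist (s := A) (x := z) (y := p),
    dist_add_dist_of_mem_segment hp]

lemma segment_subset_voronoiRegion {B : Set ℂ} (hz : z ∈ voronoiRegion A B) (ha : a ∈ A)
    (hd : infDist z A = dist z a) : segment ℝ z a ⊆ voronoiRegion A B := by
  intro p hp
  have hlt : infDist z A < infDist z B := hz
  change infDist p A < infDist p B
  linarith [infDist_eq_dist_of_mem_segment ha hd hp, dist_add_dist_of_mem_segment hp,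
    infDist_le_infDist_add_dist (s := B) (x := z) (y := p)]

end NearestPoint

section Circle

variable {σ : ℝ}

lemma cos_le_cos_of_mem_Icc_two_pi_sub {α θ : ℝ} (hα : 0 ≤ α)
    (hθ : θ ∈ Icc α (2 * Real.pi - α)) : Real.cos θ ≤ Real.cos α := by
  rcases le_total θ Real.pi with h | h
  · exact Real.cos_le_cos_of_nonneg_of_le_pi hα h hθ.1
  · rw [← Real.cos_two_pi_sub θ]
    exact Real.cos_le_cos_of_nonneg_of_le_pi hα (by linarith) (by linarith [hθ.2])

lemma circleMap_sign_mul_re (hσ : σ = 1 ∨ σ = -1) (c : ℂ) (R θ : ℝ) :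
    (circleMap c R (σ * θ)).re = c.re + R * Real.cos θ := by
  rw [← cos_sign_mul hσ, ← circleMap_zero_re, ← circleMap_sub_center c, Complex.sub_re,
    add_sub_cancel]

lemma circleMap_dist_arg (c p : ℂ) : circleMap c (dist p c) (p - c).arg = p := by
  rw [circleMap, Complex.dist_eq, Complex.norm_mul_exp_arg_mul_I, add_sub_cancel]

lemma circleMap_dist_sign_mul_arg (hσ : σ = 1 ∨ σ = -1) (c p : ℂ) :
    circleMap c (dist p c) (σ * (σ * (p - c).arg)) = p := by
  rw [← mul_assoc, mul_self_of_sign hσ, one_mul, circleMap_dist_arg]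

lemma circleMap_sign_mul_re_le (hσ : σ = 1 ∨ σ = -1) {c p : ℂ} {θ : ℝ}
    (hα : 0 ≤ σ * (p - c).arg)
    (hθ : θ ∈ Icc (σ * (p - c).arg) (2 * Real.pi - σ * (p - c).arg)) :
    (circleMap c (dist p c) (σ * θ)).re ≤ p.re := by
  calc
    (circleMap c (dist p c) (σ * θ)).re = c.re + dist p c * Real.cos θ :=
      circleMap_sign_mul_re hσ c _ θ
    _ ≤ c.re + dist p c * Real.cos (σ * (p - c).arg) := by
      gcongr
      exact cos_le_cos_of_mem_Icc_two_pi_sub hα hθ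
    _ = p.re := by rw [← circleMap_sign_mul_re hσ, circleMap_dist_sign_mul_arg hσ]

lemma exists_circleMap_sign_mul_eq (hσ : σ = 1 ∨ σ = -1) (c p : ℂ) :
    ∃ θ ∈ Ico 0 (2 * Real.pi), circleMap c (dist p c) (σ * θ) = p := by
  have hper : Function.Periodic (fun θ => circleMap c (dist p c) (σ * θ)) (2 * Real.pi) := by
    rcases hσ with rfl | rfl <;> intro θ
    · simpa only [one_mul] using periodic_circleMap c _ θ
    · simpa only [mul_add, neg_one_mul, ← sub_eq_add_neg] using
        (periodic_circleMap c _).sub_eq (-θ)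
  obtain ⟨θ, hθ, heq⟩ := hper.exists_mem_Ico₀ Real.two_pi_pos (σ * (p - c).arg)
  exact ⟨θ, hθ, heq.symm.trans (circleMap_dist_sign_mul_arg hσ c p)⟩

lemma sign_mul_arg_mem_Ioo (hσ : σ = 1 ∨ σ = -1) {u : ℂ} (hre : 0 < u.re) (him : 0 < σ * u.im) :
    σ * u.arg ∈ Ioo 0 (Real.pi / 2) := by
  have hlt : |σ * u.arg| < Real.pi / 2 := by
    rw [abs_sign_mul hσ]
    exact Complex.abs_arg_lt_pi_div_two_iff.2 (Or.inl hre)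
  refine ⟨?_, (abs_lt.1 hlt).2⟩
  have hsin : 0 < ‖u‖ * Real.sin (σ * u.arg) := by
    rwa [sin_sign_mul hσ, mul_left_comm, Complex.norm_mul_sin_arg]
  by_contra! hle
  have hpos := pos_of_mul_pos_right hsin (norm_nonneg u)
  exact (Real.sin_nonpos_of_nonpos_of_neg_pi_le hle
    (by linarith [(abs_lt.1 hlt).1, Real.pi_pos])).not_gt hpos

namespace IsLeftTail

variable {S : Set ℂ} {ρ : ℝ} {c z : ℂ}

lemma exists_mem_dist_eq (h : IsLeftTail S ρ) (hc : c ∈ S) {R : ℝ} (hR : 0 ≤ R) :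
    ∃ p ∈ S, dist p c = R := by
  obtain ⟨q, hq, hqre⟩ := h.exists_re_lt (c.re - R)
  refine h.isPreconnected.intermediate_value hc hq (f := fun p => dist p c) (by fun_prop)
    ⟨by simpa using hR, ?_⟩
  rw [Complex.dist_eq]
  have hle := Complex.abs_re_le_norm (q - c)
  rw [Complex.sub_re] at hle
  linarith [neg_le_abs (q.re - c.re)]

/- Turning counterclockwise (`σ = 1`) or clockwise (`σ = -1`) around `c` from `z`. -/
lemma exists_first_circleMap_mem (h : IsLeftTail S ρ) (hσ : σ = 1 ∨ σ = -1) (hc : c ∈ S)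
    (hz : ρ ≤ z.re) (hα : σ * (z - c).arg ∈ Ioo 0 (Real.pi / 2)) :
    ∃ θ₁ ∈ Ioc (σ * (z - c).arg) (2 * Real.pi - σ * (z - c).arg),
      circleMap c (dist z c) (σ * θ₁) ∈ S ∧
      ∀ θ ∈ Ico (σ * (z - c).arg) θ₁, circleMap c (dist z c) (σ * θ) ∉ S := by
  set α : ℝ := σ * (z - c).arg
  set w : ℝ → ℂ := fun θ => circleMap c (dist z c) (σ * θ) with hw
  have hwα : w α = z := circleMap_dist_sign_mul_arg hσ c z
  have hwre (θ : ℝ) : (w θ).re = c.re + dist z c * Real.cos θ := by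
    rw [hw, circleMap_sign_mul_re hσ]
  have hcos {θ : ℝ} (hθ : w θ ∈ S) : Real.cos θ < Real.cos α := by
    have hlt : (w θ).re < (w α).re := (h.re_lt _ hθ).trans_le (hwα.symm ▸ hz)
    rw [hwre, hwre, add_lt_add_iff_left] at hlt
    exact lt_of_mul_lt_mul_left hlt dist_nonneg
  have hbounds {θ : ℝ} (hθ : θ ∈ Ico 0 (2 * Real.pi)) (hθS : w θ ∈ S) :
      θ ∈ Ioc α (2 * Real.pi - α) := by
    constructor <;> by_contra! hlt
    · exact (hcos hθS).not_ge (Real.cos_le_cos_of_nonneg_of_le_pi hθ.1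
        (by linarith [hα.2, Real.pi_pos]) hlt)
    · refine (hcos hθS).not_ge ?_
      rw [← Real.cos_two_pi_sub θ]
      exact Real.cos_le_cos_of_nonneg_of_le_pi (by linarith [hθ.2])
        (by linarith [hα.2, Real.pi_pos]) (by linarith)
  obtain ⟨p, hpS, hpR⟩ := h.exists_mem_dist_eq hc (R := dist z c) dist_nonneg
  obtain ⟨θp, hθp, hwp⟩ := exists_circleMap_sign_mul_eq hσ c p
  have hθpS : w θp ∈ S := by
    change circleMap c (dist z c) (σ * θp) ∈ S
    rwa [← hpR, hwp]
  have hwc : Continuous w := (continuous_circleMap c _).comp (by fun_prop)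
  obtain ⟨θ₁, ⟨hθ₁, hθ₁S⟩, hmin⟩ := (isCompact_Icc.inter_right
    (h.isClosed.preimage hwc)).exists_isLeast ⟨θp, Ioc_subset_Icc_self (hbounds hθp hθpS), hθpS⟩
  refine ⟨θ₁, hbounds ⟨hα.1.le.trans hθ₁.1, by linarith [hθ₁.2, hα.1]⟩ hθ₁S, hθ₁S,
    fun θ hθ hθS => (hmin ⟨⟨hθ.1, hθ.2.le.trans hθ₁.2⟩, hθS⟩).not_gt hθ.2⟩

lemma mul_im_logBranch_circleMap (h : IsLeftTail S ρ) (hσ : σ = 1 ∨ σ = -1) (hc : c ∈ S)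
    (hz : ρ ≤ z.re) {θ₁ : ℝ}
    (hS : ∀ θ ∈ Ico (σ * (z - c).arg) θ₁, circleMap c (dist z c) (σ * θ) ∉ S) {θ : ℝ}
    (hθ : θ ∈ Ico (σ * (z - c).arg) θ₁) :
    circleMap c (dist z c) (σ * θ) ∈ rightDomain S ρ ∧
      σ * (logBranch S ρ c (circleMap c (dist z c) (σ * θ))).im = θ := by
  set α : ℝ := σ * (z - c).arg
  set w : ℝ → ℂ := fun θ => circleMap c (dist z c) (σ * θ)
  have hwα : w α = z := circleMap_dist_sign_mul_arg hσ c z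
  have hwc : Continuous w := (continuous_circleMap c _).comp (by fun_prop)
  have hα : α ∈ Ico α θ₁ := ⟨le_rfl, hθ.1.trans_lt hθ.2⟩
  have hdom : ∀ θ ∈ Ico α θ₁, w θ ∈ rightDomain S ρ := by
    have hsub := subset_rightDomain (isPreconnected_Ico.image w hwc.continuousOn)
      (image_subset_iff.2 hS) (mem_image_of_mem w hα) (hwα.symm ▸ h.mem_rightDomain hz)
    exact image_subset_iff.1 hsub
  have hzc : 0 < dist z c := dist_pos.2 fun heq => (h.re_lt c hc).not_ge (heq ▸ hz)
  have hlog : EqOn (fun θ => logBranch S ρ c (w θ))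
      (fun θ => (Real.log (dist z c) : ℂ) + (σ * θ : ℝ) * Complex.I) (Ico α θ₁) := by
    refine eqOn_of_exp_eq isPreconnected_Ico
      ((h.continuousOn_logBranch hc).comp hwc.continuousOn hdom) (by fun_prop) ?_ hα ?_
    · intro θ hθ
      rw [h.exp_logBranch hc (hdom θ hθ), Complex.exp_add, ← Complex.ofReal_exp,
        Real.exp_log hzc, circleMap_sub_center, circleMap_zero]
    · rw [hwα, h.logBranch_eq_log hc hz, ← mul_assoc, mul_self_of_sign hσ, one_mul,
        Complex.dist_eq, Complex.log]
  refine ⟨hdom θ hθ, ?_⟩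
  rw [show logBranch S ρ c (circleMap c (dist z c) (σ * θ)) = _ from hlog hθ]
  simp [← mul_assoc, mul_self_of_sign hσ]

end IsLeftTail

end Circle

namespace StackedPair

variable {A B : Set ℂ} {σ : ℝ}

lemma left_subset_voronoiRegion (h : StackedPair A B σ) : A ⊆ voronoiRegion A B := by
  intro a ha
  change infDist a A < infDist a B
  rw [infDist_zero_of_mem ha]
  exact (h.isClosed_right.notMem_iff_infDist_pos h.nonempty_right).1
    (h.disjoint.notMem_of_mem_left ha)

/- If `z` were closest to a point `b ∈ B`, the segment from `z` to `b` would avoid `A`, hence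
carry the positive angle of `z` around `c` over to `b`, which is too far from `c` for that. -/
lemma mem_voronoiRegion_of_mul_im_logBranch_pos (h : StackedPair A B σ) {c : ℂ} (hc : c ∈ A)
    {x₀ κ r : ℝ} (hx₀ : 0 ≤ x₀) (hκ : ∀ z : ℂ, z.re ≤ x₀ → ∃ x ∈ A ∪ B, dist z x ≤ κ)
    (hr : ∀ b ∈ B, 0 ≤ σ * (logBranch (connectedComponentIn A c) 0 c b).im → dist b c ≤ r)
    {z : ℂ} (hrz : r + κ < dist z c) (hκz : κ + x₀ - c.re < dist z c) (hzx : z.re ≤ x₀)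
    (hzC : z ∈ rightDomain (connectedComponentIn A c) 0)
    (hψ : 0 < σ * (logBranch (connectedComponentIn A c) 0 c z).im) : z ∈ voronoiRegion A B := by
  by_contra hcon
  have hle : infDist z B ≤ infDist z A := not_lt.1 hcon
  have hT := h.isLeftTail_left hc
  have hcC := mem_connectedComponentIn hc
  obtain ⟨b, hb, hzb⟩ := h.isClosed_right.exists_infDist_eq_dist h.nonempty_right z
  have hbκ : dist z b ≤ κ := by
    obtain ⟨x, hx | hx, hxκ⟩ := hκ z hzx
    · exact hzb ▸ hle.trans ((infDist_le_dist_of_mem hx).trans hxκ)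
    · exact hzb ▸ (infDist_le_dist_of_mem hx).trans hxκ
  have hsegA : segment ℝ z b ⊆ (connectedComponentIn A c)ᶜ := by
    intro p hp hpC
    have hpA : p ∈ A := connectedComponentIn_subset _ _ hpC
    have hpb : dist p b ≤ 0 := by
      linarith [dist_add_dist_of_mem_segment hp, infDist_le_dist_of_mem (x := z) hpA]
    exact h.disjoint.notMem_of_mem_left hpA (dist_le_zero.1 hpb ▸ hb)
  have hpre := (convex_segment (𝕜 := ℝ) z b).isPreconnected
  have hseg := subset_rightDomain hpre hsegA (left_mem_segment ℝ z b) hzC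
  have hne : ∀ p ∈ segment ℝ z b, σ * (logBranch (connectedComponentIn A c) 0 c p).im ≠ 0 := by
    intro p hp h0
    have hre := congrArg Complex.re
      (eq_norm_of_sign_mul_im_log_eq_zero h.sign (hT.exp_logBranch hcC (hseg hp)) h0)
    rw [Complex.sub_re, Complex.ofReal_re, ← Complex.dist_eq] at hre
    have hpx : p.re ≤ x₀ := (convex_halfSpace_re_le x₀).segment_subset hzx
      ((h.re_neg_right b hb).le.trans hx₀) hp
    linarith [dist_add_dist_of_mem_segment hp, dist_triangle z p c, dist_nonneg (x := p) (y := b)]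
  have hpos := forall_gt_of_forall_ne hpre
    (continuousOn_const.mul ((hT.continuousOn_im_logBranch hcC).mono hseg)) hne
    (left_mem_segment ℝ z b) hψ b (right_mem_segment ℝ z b)
  linarith [hr b hb hpos.le, dist_triangle z b c]

lemma eventually_exists_isPreconnected_joining (h : StackedPair A B σ) {c : ℂ} (hc : c ∈ A)
    {x₀ : ℝ} (hx₀ : 0 ≤ x₀) :
    ∀ᶠ y : ℝ in atTop, ∃ Γ ⊆ voronoiRegion A B, IsPreconnected Γ ∧
      (x₀ : ℂ) + (σ * y : ℝ) * Complex.I ∈ Γ ∧ (connectedComponentIn A c ∩ Γ).Nonempty := by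
  obtain ⟨κ, hκ⟩ := h.exists_dist_le x₀
  obtain ⟨r, hr⟩ := h.exists_dist_le_of_sign_mul_im_logBranch_nonneg hc
  have hT := h.isLeftTail_left hc
  filter_upwards [eventually_gt_atTop |c.im|, eventually_gt_atTop (|c.im| + (r + κ)),
    eventually_gt_atTop (|c.im| + (κ + x₀ - c.re))] with y hy hyr hyκ
  set z : ℂ := (x₀ : ℂ) + (σ * y : ℝ) * Complex.I with hz
  have hzre : z.re = x₀ := by simp [hz]
  have him : y - |c.im| ≤ σ * (z - c).im := by
    have hzim : σ * (z - c).im = y - σ * c.im := by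
      rw [Complex.sub_im, mul_sub, hz]
      simp [← mul_assoc, mul_self_of_sign h.sign]
    linarith [le_abs_self (σ * c.im), abs_sign_mul h.sign c.im]
  have hdist : y - |c.im| ≤ dist z c := by
    refine him.trans ((le_abs_self _).trans ?_)
    rw [abs_sign_mul h.sign, Complex.dist_eq]
    exact Complex.abs_im_le_norm _
  have hα := sign_mul_arg_mem_Ioo h.sign (u := z - c)
    (by rw [Complex.sub_re, hzre]; linarith [h.re_neg_left c hc]) (by linarith)
  obtain ⟨θ₁, hθ₁, hθ₁C, hmin⟩ := hT.exists_first_circleMap_mem h.sign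
    (mem_connectedComponentIn hc) (hx₀.trans_eq hzre.symm) hα
  have hwc : Continuous fun θ => circleMap c (dist z c) (σ * θ) :=
    (continuous_circleMap c _).comp (by fun_prop)
  refine ⟨(fun θ => circleMap c (dist z c) (σ * θ)) '' Icc (σ * (z - c).arg) θ₁, ?_,
    isPreconnected_Icc.image _ hwc.continuousOn,
    ⟨_, left_mem_Icc.2 hθ₁.1.le, circleMap_dist_sign_mul_arg h.sign c z⟩,
    _, hθ₁C, mem_image_of_mem _ (right_mem_Icc.2 hθ₁.1.le)⟩
  rintro _ ⟨θ, hθ, rfl⟩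
  rcases hθ.2.lt_or_eq with hlt | rfl
  · obtain ⟨hdom, hψ⟩ := hT.mul_im_logBranch_circleMap h.sign (mem_connectedComponentIn hc)
      (hx₀.trans_eq hzre.symm) hmin ⟨hθ.1, hlt⟩
    have hwd : dist (circleMap c (dist z c) (σ * θ)) c = dist z c :=
      circleMap_mem_sphere c dist_nonneg _
    have hwre : (circleMap c (dist z c) (σ * θ)).re ≤ x₀ :=
      (circleMap_sign_mul_re_le h.sign hα.1.le ⟨hθ.1, hθ.2.trans hθ₁.2⟩).trans_eq hzre
    exact h.mem_voronoiRegion_of_mul_im_logBranch_pos hc hx₀ hκ hr (by linarith) (by linarith)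
      hwre hdom (hψ.symm ▸ hα.1.trans_le hθ.1)
  · exact h.left_subset_voronoiRegion (connectedComponentIn_subset _ _ hθ₁C)

lemma eventually_mem_voronoiRegion (h : StackedPair A B σ) {x₀ : ℝ} (hx₀ : 0 ≤ x₀) :
    ∀ᶠ y : ℝ in atTop, (x₀ : ℂ) + (σ * y : ℝ) * Complex.I ∈ voronoiRegion A B := by
  obtain ⟨c, hc⟩ := h.nonempty_left
  exact (h.eventually_exists_isPreconnected_joining hc hx₀).mono fun y ⟨_, hΓ, _, hy, _⟩ => hΓ hy

lemma isPreconnected_voronoiRegion (h : StackedPair A B σ) :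
    IsPreconnected (voronoiRegion A B) := by
  have hjoin : ∀ u ∈ voronoiRegion A B, ∀ᶠ y : ℝ in atTop, ∃ Γ ⊆ voronoiRegion A B,
      IsPreconnected Γ ∧ ((0 : ℝ) : ℂ) + (σ * y : ℝ) * Complex.I ∈ Γ ∧ u ∈ Γ := by
    intro u hu
    obtain ⟨a, ha, hd⟩ := h.isClosed_left.exists_infDist_eq_dist h.nonempty_left u
    filter_upwards [h.eventually_exists_isPreconnected_joining ha le_rfl]
      with y ⟨Γ, hΓ, hΓc, hy, hCΓ⟩
    have hsegC : IsPreconnected (segment ℝ u a ∪ connectedComponentIn A a) :=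
      (convex_segment u a).isPreconnected.union a (right_mem_segment ℝ u a)
        (mem_connectedComponentIn ha) isPreconnected_connectedComponentIn
    refine ⟨segment ℝ u a ∪ connectedComponentIn A a ∪ Γ, union_subset (union_subset
        (segment_subset_voronoiRegion hu ha hd)
        ((connectedComponentIn_subset _ _).trans h.left_subset_voronoiRegion)) hΓ,
      hsegC.union' (hCΓ.mono (inter_subset_inter_left _ subset_union_right)) hΓc,
      Or.inr hy, Or.inl (Or.inl (left_mem_segment ℝ u a))⟩
  refine isPreconnected_of_forall_pair fun u hu v hv => ?_
  obtain ⟨y, ⟨Γ, hΓ, hΓc, hyΓ, huΓ⟩, ⟨Γ', hΓ', hΓ'c, hyΓ', hvΓ'⟩⟩ :=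
    ((hjoin u hu).and (hjoin v hv)).exists
  exact ⟨Γ ∪ Γ', union_subset hΓ hΓ', Or.inl huΓ, Or.inr hvΓ', hΓc.union _ hyΓ hyΓ' hΓ'c⟩

end StackedPair

/-! ### Connectedness of the equidistant set -/

section Unicoherence

variable {α : Type*} [TopologicalSpace α] [SimplyConnectedSpace α] [LocallyPathConnectedSpace α]

lemma exists_continuous_exp_eq_of_union_eq_univ {F G : Set α} (hF : IsClosed F) (hG : IsClosed G)
    (hFG : F ∪ G = univ) {f g : α → ℂ} (hf : Continuous f) (hg : Continuous g)
    (hfg : ∀ z ∈ F ∩ G, Complex.exp (f z) = Complex.exp (g z)) {z₀ : α} (hz₀ : z₀ ∈ F) :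
    ∃ L : α → ℂ, Continuous L ∧ L z₀ = f z₀ ∧
      (∀ z ∈ F, Complex.exp (L z) = Complex.exp (f z)) ∧
      ∀ z ∈ G, Complex.exp (L z) = Complex.exp (g z) := by
  classical
  set q : α → ℂ := F.piecewise (fun z => Complex.exp (f z)) fun z => Complex.exp (g z)
  have hqF : EqOn q (fun z => Complex.exp (f z)) F := piecewise_eqOn F _ _
  have hqG : EqOn q (fun z => Complex.exp (g z)) G := fun z hz => by
    by_cases hzF : z ∈ F
    exacts [(hqF hzF).trans (hfg z ⟨hzF, hz⟩), piecewise_eq_of_notMem F _ _ hzF]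
  have hqc : Continuous q := by
    rw [← continuousOn_univ, ← hFG]
    exact (hf.cexp.continuousOn.congr hqF).union_of_isClosed (hg.cexp.continuousOn.congr hqG) hF hG
  have hq0 (z : α) : q z ≠ 0 := by
    simp only [q, piecewise]
    split_ifs <;> exact Complex.exp_ne_zero _
  obtain ⟨L, ⟨hL₀, hL⟩, -⟩ := IsCoveringMapOn.existsUnique_continuousMap_lifts
    Complex.isCoveringMapOn_exp (⟨q, hqc⟩ : C(α, ℂ)) (a₀ := z₀) (e₀ := f z₀) (hqF hz₀).symm
    (fun z => by simpa using hq0 z)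
  exact ⟨L, L.continuous, hL₀, fun z hz => (congrFun hL z).trans (hqF hz),
    fun z hz => (congrFun hL z).trans (hqG hz)⟩

/- If `h` separates the intersection, taking the values `0` and `1` on it, then `exp (πih)` on `F`
and `exp (-πih)` on `G` glue to a map whose logarithm would take both values `±πi`. -/
lemma isPreconnected_inter_of_union_eq_univ [NormalSpace α] {F G : Set α} (hFc : IsPreconnected F)
    (hGc : IsPreconnected G) (hF : IsClosed F) (hG : IsClosed G) (hFG : F ∪ G = univ) :
    IsPreconnected (F ∩ G) := by
  rw [isPreconnected_closed_iff]
  intro t t' ht ht' hsub ⟨z₀, hz₀, hz₀t⟩ ⟨z₁, hz₁, hz₁t'⟩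
  by_contra hne
  have hdisj : Disjoint (F ∩ G ∩ t) (F ∩ G ∩ t') :=
    disjoint_left.2 fun x hx hx' => hne ⟨x, hx.1, hx.2, hx'.2⟩
  obtain ⟨h, h0, h1, -⟩ := exists_continuous_zero_one_of_isClosed ((hF.inter hG).inter ht)
    ((hF.inter hG).inter ht') hdisj
  have h0z : h z₀ = 0 := h0 ⟨hz₀, hz₀t⟩
  have h1z : h z₁ = 1 := h1 ⟨hz₁, hz₁t'⟩
  set f : α → ℂ := fun z => Real.pi * h z * Complex.I with hf
  have hfc : Continuous f := by fun_prop
  obtain ⟨L, hLc, hL₀, hLF, hLG⟩ := exists_continuous_exp_eq_of_union_eq_univ (g := fun z => -f z)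
    hF hG hFG hfc hfc.neg (fun z hz => by
      rcases hsub hz with hzt | hzt
      · simp [hf, show h z = 0 from h0 ⟨hz, hzt⟩]
      · simp [hf, show h z = 1 from h1 ⟨hz, hzt⟩, Complex.exp_pi_mul_I, Complex.exp_neg]) hz₀.1
  have hLf : L z₁ = f z₁ := eqOn_of_exp_eq hFc hLc.continuousOn hfc.continuousOn hLF hz₀.1 hL₀ hz₁.1
  have hLg : L z₁ = -f z₁ := eqOn_of_exp_eq hGc hLc.continuousOn hfc.neg.continuousOn hLG hz₀.2
    (by simp [hL₀, hf, h0z]) hz₁.2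
  have hzero : f z₁ = 0 := self_eq_neg.1 (hLf.symm.trans hLg)
  simp [hf, h1z, Real.pi_ne_zero] at hzero

end Unicoherence

lemma eq_of_wbtw_of_dist_eq {V : Type*} [NormedAddCommGroup V] [NormedSpace ℝ V] {z p a b : V}
    (ha : Wbtw ℝ z p a) (hb : Wbtw ℝ z p b) (hp : p ≠ z) (hab : dist z a = dist z b) : a = b := by
  have hray : SameRay ℝ (a - z) (b - z) := ha.sameRay_vsub_left.symm.trans hb.sameRay_vsub_left
    fun h0 => (hp (sub_eq_zero.1 h0)).elim
  rw [dist_comm, dist_comm z, dist_eq_norm, dist_eq_norm] at hab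
  exact sub_left_injective (hray.eq_of_norm_eq hab)

/-- The closed Voronoi region of `A` against `B`: the points at least as close to `A` as to `B`. -/
def closedVoronoiRegion (A B : Set ℂ) : Set ℂ := {z | infDist z A ≤ infDist z B}

section ClosedVoronoiRegion

variable {A B : Set ℂ}

lemma voronoiRegion_subset_closedVoronoiRegion : voronoiRegion A B ⊆ closedVoronoiRegion A B :=
  fun z (hz : infDist z A < infDist z B) => hz.le

lemma disjoint_closedVoronoiRegion_voronoiRegion :
    Disjoint (closedVoronoiRegion A B) (voronoiRegion B A) :=
  disjoint_left.2 fun z (hz : infDist z A ≤ infDist z B) => not_lt_of_ge hz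

lemma voronoiRegion_subset_diff {z : ℂ} (hz : z ∈ closedVoronoiRegion A B) :
    voronoiRegion B A ⊆ closedVoronoiRegion B A \ {z} := by
  refine fun e he => ⟨voronoiRegion_subset_closedVoronoiRegion he, ?_⟩
  rintro rfl
  exact disjoint_closedVoronoiRegion_voronoiRegion.notMem_of_mem_left hz he

lemma isClosed_closedVoronoiRegion : IsClosed (closedVoronoiRegion A B) :=
  isClosed_le (continuous_infDist_pt A) (continuous_infDist_pt B)

lemma closedVoronoiRegion_inter : closedVoronoiRegion A B ∩ closedVoronoiRegion B A =
    equidistSet A B :=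
  ext fun z => (le_antisymm_iff (a := infDist z A)).symm

lemma closedVoronoiRegion_union : closedVoronoiRegion A B ∪ closedVoronoiRegion B A = univ :=
  eq_univ_of_forall fun z => le_total (infDist z A) (infDist z B)

lemma mem_voronoiRegion_of_mem_segment (hB : IsClosed B) (hBne : B.Nonempty)
    (hAB : Disjoint A B) {z a p : ℂ} (hz : z ∈ closedVoronoiRegion A B) (ha : a ∈ A)
    (hza : infDist z A = dist z a) (hp : p ∈ segment ℝ z a) (hpz : p ≠ z) :
    p ∈ voronoiRegion A B := by
  by_contra hcon
  have hle : infDist p B ≤ infDist p A := not_lt.1 hcon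
  obtain ⟨b, hb, hpb⟩ := hB.exists_infDist_eq_dist hBne p
  have hzb : infDist z A ≤ dist z b := le_trans hz (infDist_le_dist_of_mem hb)
  have hzpa := dist_add_dist_of_mem_segment hp
  have hpa := infDist_eq_dist_of_mem_segment ha hza hp
  have htri := dist_triangle z p b
  have hab := eq_of_wbtw_of_dist_eq (dist_add_dist_eq_iff.1 hzpa)
    (dist_add_dist_eq_iff.1 (by linarith : dist z p + dist p b = dist z b)) hpz (by linarith)
  exact hAB.notMem_of_mem_left ha (hab ▸ hb)

lemma inter_equidistSet_nonempty {K : Set ℂ} (hK : IsPreconnected K) {u v : ℂ}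
    (hu : u ∈ K) (huA : u ∈ voronoiRegion A B) (hv : v ∈ K) (hvB : v ∈ voronoiRegion B A) :
    (K ∩ equidistSet A B).Nonempty :=
  let ⟨z, hz, hzE⟩ := hK.intermediate_value₂ hu hv (continuous_infDist_pt A).continuousOn
    (continuous_infDist_pt B).continuousOn (le_of_lt huA) (le_of_lt hvB)
  ⟨z, hz, hzE⟩

end ClosedVoronoiRegion

namespace StackedPair

variable {A B : Set ℂ} {σ : ℝ}

lemma closedVoronoiRegion_subset_closure (h : StackedPair A B σ) :
    closedVoronoiRegion A B ⊆ closure (voronoiRegion A B) := by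
  intro z hz
  obtain ⟨a, ha, hza⟩ := h.isClosed_left.exists_infDist_eq_dist h.nonempty_left z
  rcases eq_or_ne z a with rfl | hne
  · exact subset_closure (h.left_subset_voronoiRegion ha)
  · refine closure_mono (fun p hp => ?_)
      (segment_subset_closure_openSegment (𝕜 := ℝ) (left_mem_segment ℝ z a))
    refine mem_voronoiRegion_of_mem_segment h.isClosed_right h.nonempty_right h.disjoint hz ha hza
      (openSegment_subset_segment ℝ z a hp) ?_
    rintro rfl
    exact hne (left_mem_openSegment_iff.1 hp)

lemma isPreconnected_of_voronoiRegion_subset (h : StackedPair A B σ) {K : Set ℂ}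
    (hK : voronoiRegion A B ⊆ K) (hKcl : K ⊆ closedVoronoiRegion A B) : IsPreconnected K :=
  h.isPreconnected_voronoiRegion.subset_closure hK (hKcl.trans h.closedVoronoiRegion_subset_closure)

lemma isPreconnected_closedVoronoiRegion (h : StackedPair A B σ) :
    IsPreconnected (closedVoronoiRegion A B) :=
  h.isPreconnected_of_voronoiRegion_subset voronoiRegion_subset_closedVoronoiRegion le_rfl

lemma isPreconnected_equidistSet (h : StackedPair A B σ) : IsPreconnected (equidistSet A B) :=
  closedVoronoiRegion_inter (A := A) ▸ isPreconnected_inter_of_union_eq_univ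
    h.isPreconnected_closedVoronoiRegion h.symm.isPreconnected_closedVoronoiRegion
    isClosed_closedVoronoiRegion isClosed_closedVoronoiRegion closedVoronoiRegion_union

lemma exists_mem_equidistSet_re_eq_of_nonneg (h : StackedPair A B σ) {x : ℝ} (hx : 0 ≤ x) :
    ∃ z ∈ equidistSet A B, z.re = x := by
  obtain ⟨y, hy⟩ := (h.eventually_mem_voronoiRegion hx).exists
  obtain ⟨y', hy'⟩ := (h.symm.eventually_mem_voronoiRegion hx).exists
  have hline : IsPreconnected {z : ℂ | z.re = x} :=
    (convex_hyperplane Complex.reLm.isLinear x).isPreconnected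
  obtain ⟨z, hz, hzE⟩ := inter_equidistSet_nonempty hline (by simp) hy (by simp) hy'
  exact ⟨z, hzE, hz⟩

lemma exists_mem_equidistSet_re_le (h : StackedPair A B σ) (x : ℝ) :
    ∃ z ∈ equidistSet A B, z.re ≤ x := by
  obtain ⟨a, ha⟩ := h.nonempty_left
  obtain ⟨b, hb⟩ := h.nonempty_right
  obtain ⟨a', ha', ha'x⟩ := h.exists_re_lt_left a ha x
  obtain ⟨b', hb', hb'x⟩ := h.exists_re_lt_right b hb x
  obtain ⟨z, hz, hzE⟩ := inter_equidistSet_nonempty (convex_halfSpace_re_le x).isPreconnected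
    ha'x.le (h.left_subset_voronoiRegion (connectedComponentIn_subset _ _ ha'))
    hb'x.le (h.symm.left_subset_voronoiRegion (connectedComponentIn_subset _ _ hb'))
  exact ⟨z, hzE, hz⟩

lemma re_image_equidistSet (h : StackedPair A B σ) : Complex.re '' equidistSet A B = univ := by
  refine eq_univ_of_forall fun x => ?_
  obtain ⟨z, hz, hzx⟩ := h.exists_mem_equidistSet_re_le x
  obtain ⟨w, hw, hwx⟩ := h.exists_mem_equidistSet_re_eq_of_nonneg (le_max_right x 0)
  exact h.isPreconnected_equidistSet.intermediate_value hz hw Complex.continuous_re.continuousOn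
    ⟨hzx, hwx ▸ le_max_left x 0⟩

end StackedPair

/-! ### Branches of the logarithm at points of the equidistant set -/

lemma isCompact_segment {V : Type*} [AddCommGroup V] [Module ℝ V] [TopologicalSpace V]
    [IsTopologicalAddGroup V] [ContinuousSMul ℝ V] (v w : V) : IsCompact (segment ℝ v w) :=
  segment_eq_image_lineMap ℝ v w ▸ isCompact_Icc.image AffineMap.lineMap_continuous

lemma eq_or_re_lt_of_mem_segment {z w p : ℂ} (hw : w.re < z.re) (hp : p ∈ segment ℝ z w) :
    p = z ∨ p.re < z.re := by
  obtain ⟨s, t, -, ht, hst, rfl⟩ := hp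
  obtain rfl : s = 1 - t := by linarith
  rcases ht.eq_or_lt with rfl | ht
  · exact Or.inl (by simp)
  · refine Or.inr ?_
    simp only [Complex.real_smul, Complex.add_re, Complex.re_ofReal_mul]
    nlinarith

/-- The points of `A` nearest to `z`. -/
def nearestPoints (A : Set ℂ) (z : ℂ) : Set ℂ := {a | a ∈ A ∧ infDist z A = dist z a}

/-- The component of `A` through `a`, prolonged by the segment from `z` to `a`. For
`a ∈ nearestPoints A z` this is a left tail through `z` that avoids the region of points closer to
the other set. -/
def spoke (A : Set ℂ) (z a : ℂ) : Set ℂ := connectedComponentIn A a ∪ segment ℝ z a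

/-- A bound for the real parts of the points of a spoke from `z` to a set of points with negative
real parts. -/
noncomputable def spokeBound (z : ℂ) : ℝ := max z.re 0 + 1

section Spoke

variable {A : Set ℂ} {z a : ℂ}

lemma re_lt_spokeBound (z : ℂ) : z.re < spokeBound z :=
  lt_add_of_le_of_pos (le_max_left _ _) one_pos

lemma spokeBound_pos (z : ℂ) : 0 < spokeBound z :=
  add_pos_of_nonneg_of_pos (le_max_right _ _) one_pos

lemma left_mem_spoke : z ∈ spoke A z a := Or.inr (left_mem_segment ℝ z a)

lemma nearestPoints_nonempty (hA : IsClosed A) (hne : A.Nonempty) (z : ℂ) :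
    (nearestPoints A z).Nonempty :=
  hA.exists_infDist_eq_dist hne z

end Spoke

namespace StackedPair

variable {A B : Set ℂ} {σ : ℝ} {z a b e : ℂ}

lemma isLeftTail_spoke (h : StackedPair A B σ) (z : ℂ) (ha : a ∈ A) :
    IsLeftTail (spoke A z a) (spokeBound z) := by
  refine (h.isLeftTail_left ha).union (spokeBound_pos z).le ?_ (convex_segment z a).isPreconnected
    ⟨a, mem_connectedComponentIn ha, right_mem_segment ℝ z a⟩
    ((convex_halfSpace_re_lt (spokeBound z)).segment_subset (re_lt_spokeBound z)
      ((h.re_neg_left a ha).trans (spokeBound_pos z)))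
  exact (isCompact_segment z a).isClosed

lemma isPreconnected_spoke (h : StackedPair A B σ) (z : ℂ) (ha : a ∈ A) :
    IsPreconnected (spoke A z a) :=
  (h.isLeftTail_spoke z ha).isPreconnected

lemma eq_or_mem_voronoiRegion_of_mem_spoke (h : StackedPair A B σ)
    (hz : z ∈ closedVoronoiRegion A B) (ha : a ∈ nearestPoints A z) (he : e ∈ spoke A z a) :
    e = z ∨ e ∈ voronoiRegion A B := by
  rcases he with he | he
  · exact Or.inr (h.left_subset_voronoiRegion (connectedComponentIn_subset _ _ he))
  · exact or_iff_not_imp_left.2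
      (mem_voronoiRegion_of_mem_segment h.isClosed_right h.nonempty_right h.disjoint hz ha.1 ha.2
        he)

lemma eq_or_re_lt_of_mem_spoke (h : StackedPair A B σ) (hz : 0 ≤ z.re) (ha : a ∈ A)
    (he : e ∈ spoke A z a) : e = z ∨ e.re < z.re := by
  rcases he with he | he
  · exact Or.inr (((h.isLeftTail_left ha).re_lt e he).trans_le hz)
  · exact eq_or_re_lt_of_mem_segment ((h.re_neg_left a ha).trans_le hz) he

lemma closedVoronoiRegion_diff_subset_compl_spoke (h : StackedPair A B σ)
    (hz : z ∈ closedVoronoiRegion A B) (ha : a ∈ nearestPoints A z) :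
    closedVoronoiRegion B A \ {z} ⊆ (spoke A z a)ᶜ := fun _ he hes =>
  (h.eq_or_mem_voronoiRegion_of_mem_spoke hz ha hes).elim he.2
    (disjoint_closedVoronoiRegion_voronoiRegion.notMem_of_mem_left he.1)

lemma isPreconnected_closedVoronoiRegion_diff (h : StackedPair A B σ)
    (hz : z ∈ closedVoronoiRegion A B) : IsPreconnected (closedVoronoiRegion B A \ {z}) :=
  h.symm.isPreconnected_of_voronoiRegion_subset (voronoiRegion_subset_diff hz) sdiff_subset

lemma exists_mem_closedVoronoiRegion_diff_le_re (h : StackedPair A B σ)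
    (hz : z ∈ closedVoronoiRegion A B) (x : ℝ) : ∃ e ∈ closedVoronoiRegion B A \ {z}, x ≤ e.re :=
  let ⟨_, hy⟩ := (h.symm.eventually_mem_voronoiRegion (le_max_right x 0)).exists
  ⟨_, voronoiRegion_subset_diff hz hy, by simp⟩

lemma closedVoronoiRegion_diff_subset_rightDomain (h : StackedPair A B σ)
    (hz : z ∈ closedVoronoiRegion A B) {S : Set ℂ} {ρ : ℝ} (hS : IsLeftTail S ρ)
    (hd : closedVoronoiRegion B A \ {z} ⊆ Sᶜ) :
    closedVoronoiRegion B A \ {z} ⊆ rightDomain S ρ :=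
  let ⟨_, hy, hρy⟩ := h.exists_mem_closedVoronoiRegion_diff_le_re hz ρ
  subset_rightDomain (h.isPreconnected_closedVoronoiRegion_diff hz) hd hy (hS.mem_rightDomain hρy)

lemma closedVoronoiRegion_diff_subset_rightDomain_spoke (h : StackedPair A B σ)
    (hz : z ∈ closedVoronoiRegion A B) (ha : a ∈ nearestPoints A z) :
    closedVoronoiRegion B A \ {z} ⊆ rightDomain (spoke A z a) (spokeBound z) :=
  h.closedVoronoiRegion_diff_subset_rightDomain hz (h.isLeftTail_spoke z ha.1)
    (h.closedVoronoiRegion_diff_subset_compl_spoke hz ha)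

end StackedPair

/-! ### Vertical lines to the right of the imaginary axis -/

namespace StackedPair

variable {A B : Set ℂ} {σ : ℝ} {z z' a b : ℂ}

lemma exists_mem_connectedComponentIn_mul_im_logBranch_lt (h : StackedPair A B σ)
    (hz : z ∈ closedVoronoiRegion A B) (ha : a ∈ nearestPoints A z) (hb : b ∈ B) :
    ∃ d ∈ connectedComponentIn B b,
      σ * (logBranch (spoke A z a) (spokeBound z) z d).im < -(Real.pi / 2) := by
  have hT := h.isLeftTail_spoke z ha.1
  obtain ⟨m, hm⟩ := (h.below a ha.1 b hb).2
  obtain ⟨m', M, hm'⟩ := exists_forall_re_mem_Ioo (isCompact_segment z a)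
  obtain ⟨d, hd, hdm⟩ := h.exists_re_lt_right b hb (min m m')
  have hdom : d ∈ rightDomain (spoke A z a) (spokeBound z) :=
    h.closedVoronoiRegion_diff_subset_rightDomain_spoke hz ha (voronoiRegion_subset_diff hz
      (h.symm.left_subset_voronoiRegion (connectedComponentIn_subset _ _ hd)))
  have hlt := hm d hd (hdm.trans_le (min_le_left _ _))
  rw [(h.isLeftTail_left ha.1).logBranch_eq_of_subset hT subset_union_left
    (mem_connectedComponentIn ha.1) hdom] at hlt
  exact ⟨d, hd, hT.mul_im_logBranch_lt_of_base h.sign (convex_segment z a).isPreconnected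
    subset_union_right hdom
    (fun p hp => (hdm.trans_le (min_le_right _ _)).trans (hm' p hp).1)
    (right_mem_segment ℝ z a) (left_mem_segment ℝ z a) hlt⟩

lemma spoke_union_ray_subset_rightDomain (h : StackedPair A B σ) (hzre : 0 < z.re)
    (hre : z'.re = z.re) (him : z'.im ≠ z.im) (hz : z ∈ closedVoronoiRegion A B)
    (hz' : z' ∈ closedVoronoiRegion B A) (ha : a ∈ nearestPoints A z)
    (hb : b ∈ nearestPoints B z') :
    spoke B z' b ∪ (fun t : ℝ => z' + t) '' Ici 0 ⊆
      rightDomain (spoke A z a) (spokeBound z) := by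
  refine union_subset (fun e he => h.closedVoronoiRegion_diff_subset_rightDomain_spoke hz ha ?_) ?_
  · rcases h.symm.eq_or_mem_voronoiRegion_of_mem_spoke hz' hb he with rfl | he'
    · exact ⟨hz', fun he => him (congrArg Complex.im he)⟩
    · exact voronoiRegion_subset_diff hz he'
  · have hmem : z' + (spokeBound z : ℝ) ∈ (fun t : ℝ => z' + t) '' Ici 0 :=
      mem_image_of_mem _ (spokeBound_pos z).le
    refine subset_rightDomain (isPreconnected_Ici.image _ (by fun_prop)) ?_ hmem
      ((h.isLeftTail_spoke z ha.1).mem_rightDomain (by simp [hre, hzre.le]))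
    rintro _ ⟨t, ht, rfl⟩ hts
    rcases h.eq_or_re_lt_of_mem_spoke hzre.le ha.1 hts with heq | hlt
    · exact him (by simpa using congrArg Complex.im heq)
    · simp only [Complex.add_re, Complex.ofReal_re, hre] at hlt
      linarith [mem_Ici.1 ht]

lemma mul_im_logBranch_pos_of_mem_spoke (h : StackedPair A B σ) (hzre : 0 < z.re)
    (hre : z'.re = z.re) (him : σ * z.im < σ * z'.im) (hz : z ∈ closedVoronoiRegion A B)
    (hz' : z' ∈ closedVoronoiRegion B A) (ha : a ∈ nearestPoints A z)
    (hb : b ∈ nearestPoints B z') {e : ℂ} (he : e ∈ spoke B z' b) :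
    0 < σ * (logBranch (spoke A z a) (spokeBound z) z e).im := by
  have hT := h.isLeftTail_spoke z ha.1
  have hne : z'.im ≠ z.im := fun heq => him.ne (by rw [heq])
  have hdom := h.spoke_union_ray_subset_rightDomain hzre hre hne hz hz' ha hb
  have hK : IsPreconnected (spoke B z' b ∪ (fun t : ℝ => z' + t) '' Ici 0) :=
    (h.symm.isPreconnected_spoke z' hb.1).union z' left_mem_spoke ⟨0, by simp, by simp⟩
      (isPreconnected_Ici.image _ (by fun_prop))
  refine forall_gt_of_forall_ne hK
    (φ := fun e => σ * (logBranch (spoke A z a) (spokeBound z) z e).im)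
    (continuousOn_const.mul ((hT.continuousOn_im_logBranch left_mem_spoke).mono hdom))
    (fun p hp h0 => ?_) (x₀ := z' + (spokeBound z : ℝ))
    (Or.inr (mem_image_of_mem _ (spokeBound_pos z).le)) ?_ e (Or.inl he)
  · have hnorm := eq_norm_of_sign_mul_im_log_eq_zero h.sign
      (hT.exp_logBranch left_mem_spoke (hdom hp)) h0
    have hpos : 0 < ‖p - z‖ := norm_pos_iff.2 (sub_ne_zero.2 fun hpz =>
      rightDomain_subset_compl (hdom hp) (hpz ▸ left_mem_spoke))
    have hpre : p.re - z.re = ‖p - z‖ := by simpa using congrArg Complex.re hnorm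
    have hpim : p.im - z.im = 0 := by simpa using congrArg Complex.im hnorm
    rcases hp with hp | ⟨t, -, rfl⟩
    · rcases h.symm.eq_or_re_lt_of_mem_spoke (hre ▸ hzre.le) hb.1 hp with rfl | hlt <;> linarith
    · exact hne (by simpa [sub_eq_zero] using hpim)
  · rw [hT.logBranch_eq_log left_mem_spoke (by simp [hre, hzre.le]), Complex.log_im]
    refine (sign_mul_arg_mem_Ioo h.sign ?_ ?_).1
    · simpa [hre] using spokeBound_pos z
    · simpa [mul_sub] using him

/- The spoke of `z'` leaves `z'` above the spoke of `z`, but far to the left it is below. -/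
lemma mul_im_le_of_re_eq (h : StackedPair A B σ) (hzre : 0 < z.re) (hre : z'.re = z.re)
    (hz : z ∈ closedVoronoiRegion A B) (hz' : z' ∈ closedVoronoiRegion B A) :
    σ * z'.im ≤ σ * z.im := by
  by_contra! him
  obtain ⟨a, ha⟩ := nearestPoints_nonempty h.isClosed_left h.nonempty_left z
  obtain ⟨b, hb⟩ := nearestPoints_nonempty h.isClosed_right h.nonempty_right z'
  obtain ⟨d, hd, hlt⟩ := h.exists_mem_connectedComponentIn_mul_im_logBranch_lt hz ha hb.1
  linarith [h.mul_im_logBranch_pos_of_mem_spoke hzre hre him hz hz' ha hb (Or.inl hd), Real.pi_pos]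

lemma existsUnique_mem_equidistSet_re_eq (h : StackedPair A B σ) {x : ℝ} (hx : 0 < x) :
    ∃! z, z ∈ equidistSet A B ∧ z.re = x := by
  obtain ⟨z, hz, rfl⟩ := h.exists_mem_equidistSet_re_eq_of_nonneg hx.le
  refine ⟨z, ⟨hz, rfl⟩, fun z' ⟨hz', hre⟩ => Complex.ext hre ?_⟩
  have hle := h.mul_im_le_of_re_eq hx hre hz.le hz'.ge
  have hge := h.mul_im_le_of_re_eq (hre ▸ hx) hre.symm hz'.le hz.ge
  have hσ : σ ≠ 0 := by rcases h.sign with rfl | rfl <;> norm_num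
  exact mul_left_cancel₀ hσ (hle.antisymm hge)

end StackedPair

/-! ### Skew symmetry of the logarithms -/

open Classical in
/-- The branch of `e ↦ log (e - z)` on `closedVoronoiRegion B A \ {z}` that is the principal one
far to the right. It exists when `StackedPair A B σ` and `z ∈ closedVoronoiRegion A B`; the junk
value is `0`. -/
noncomputable def regionLog (A B : Set ℂ) (z : ℂ) : ℂ → ℂ :=
  if h : ∃ l : ℂ → ℂ, ContinuousOn l (closedVoronoiRegion B A \ {z}) ∧
      (∀ e ∈ closedVoronoiRegion B A \ {z}, Complex.exp (l e) = e - z) ∧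
      ∀ e : ℂ, spokeBound z ≤ e.re → l e = Complex.log (e - z) then h.choose else 0

/-- The difference of the logarithms of `e - z` and `z - e` that are provided by the two regions.
It turns out to be a constant logarithm of `-1`. -/
noncomputable def logSkew (A B : Set ℂ) (z e : ℂ) : ℂ := regionLog A B z e - regionLog B A e z

lemma logSkew_comm (A B : Set ℂ) (z e : ℂ) : logSkew A B z e = -logSkew B A e z :=
  (neg_sub _ _).symm

namespace StackedPair

variable {A B : Set ℂ} {σ : ℝ} {z z' e e' : ℂ}

lemma regionLog_spec (h : StackedPair A B σ) (hz : z ∈ closedVoronoiRegion A B) :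
    ContinuousOn (regionLog A B z) (closedVoronoiRegion B A \ {z}) ∧
      (∀ e ∈ closedVoronoiRegion B A \ {z}, Complex.exp (regionLog A B z e) = e - z) ∧
      ∀ e : ℂ, spokeBound z ≤ e.re → regionLog A B z e = Complex.log (e - z) := by
  obtain ⟨a, ha⟩ := nearestPoints_nonempty h.isClosed_left h.nonempty_left z
  have hT := h.isLeftTail_spoke z ha.1
  have hsub := h.closedVoronoiRegion_diff_subset_rightDomain_spoke hz ha
  have hex : ∃ l : ℂ → ℂ, ContinuousOn l (closedVoronoiRegion B A \ {z}) ∧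
      (∀ e ∈ closedVoronoiRegion B A \ {z}, Complex.exp (l e) = e - z) ∧
      ∀ e : ℂ, spokeBound z ≤ e.re → l e = Complex.log (e - z) :=
    ⟨logBranch (spoke A z a) (spokeBound z) z,
      (hT.continuousOn_logBranch left_mem_spoke).mono hsub,
      fun e he => hT.exp_logBranch left_mem_spoke (hsub he),
      fun e he => hT.logBranch_eq_log left_mem_spoke he⟩
  rw [regionLog, dif_pos hex]
  exact hex.choose_spec

lemma continuousOn_regionLog (h : StackedPair A B σ) (hz : z ∈ closedVoronoiRegion A B) :
    ContinuousOn (regionLog A B z) (closedVoronoiRegion B A \ {z}) :=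
  (h.regionLog_spec hz).1

lemma exp_regionLog (h : StackedPair A B σ) (hz : z ∈ closedVoronoiRegion A B)
    (he : e ∈ closedVoronoiRegion B A \ {z}) : Complex.exp (regionLog A B z e) = e - z :=
  (h.regionLog_spec hz).2.1 e he

lemma regionLog_eq_log (h : StackedPair A B σ) (hz : z ∈ closedVoronoiRegion A B)
    (he : spokeBound z ≤ e.re) : regionLog A B z e = Complex.log (e - z) :=
  (h.regionLog_spec hz).2.2 e he

lemma logBranch_eq_regionLog (h : StackedPair A B σ) {S : Set ℂ} {ρ : ℝ} (hS : IsLeftTail S ρ)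
    {p s : ℂ} (hp : p ∈ closedVoronoiRegion A B) (hd : closedVoronoiRegion B A \ {p} ⊆ Sᶜ)
    (hs : s ∈ S) (hsA : s ∈ closedVoronoiRegion A B) :
    EqOn (logBranch S ρ s) (regionLog A B s) (closedVoronoiRegion B A \ {p}) := by
  have hdom := h.closedVoronoiRegion_diff_subset_rightDomain hp hS hd
  have hsub : closedVoronoiRegion B A \ {p} ⊆ closedVoronoiRegion B A \ {s} :=
    fun e he => ⟨he.1, fun hes => hd he (hes ▸ hs)⟩
  obtain ⟨y, hy, hyre⟩ := h.exists_mem_closedVoronoiRegion_diff_le_re hp (max ρ (spokeBound s))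
  refine eqOn_of_exp_eq (h.isPreconnected_closedVoronoiRegion_diff hp)
    ((hS.continuousOn_logBranch hs).mono hdom) ((h.continuousOn_regionLog hsA).mono hsub)
    (fun e he => ?_) hy ?_
  · rw [hS.exp_logBranch hs (hdom he), h.exp_regionLog hsA (hsub he)]
  · rw [hS.logBranch_eq_log hs ((le_max_left _ _).trans hyre),
      h.regionLog_eq_log hsA ((le_max_right _ _).trans hyre)]

lemma exp_logSkew (h : StackedPair A B σ) (hz : z ∈ closedVoronoiRegion A B)
    (he : e ∈ closedVoronoiRegion B A) (hne : z ≠ e) : Complex.exp (logSkew A B z e) = -1 := by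
  rw [logSkew, Complex.exp_sub, h.exp_regionLog hz ⟨he, hne.symm⟩,
    h.symm.exp_regionLog he ⟨hz, hne⟩, ← neg_sub z e, neg_div,
    div_self (sub_ne_zero.2 hne)]

lemma logSkew_eq_of_mem_isLeftTail (h : StackedPair A B σ) {S : Set ℂ} {ρ : ℝ}
    (hS : IsLeftTail S ρ) (hSA : S ⊆ closedVoronoiRegion A B) {p s s' : ℂ}
    (hp : p ∈ closedVoronoiRegion A B) (hd : closedVoronoiRegion B A \ {p} ⊆ Sᶜ)
    (hs : s ∈ S) (hs' : s' ∈ S) (he : e ∈ closedVoronoiRegion B A \ {p}) :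
    logSkew A B s e = logSkew A B s' e := by
  have hne (t : ℂ) (ht : t ∈ S) : t ≠ e := ne_of_mem_of_not_mem ht (hd he)
  have hleft : ContinuousOn (fun t => regionLog A B t e) S :=
    (hS.continuousOn_logBranch_base
      (h.closedVoronoiRegion_diff_subset_rightDomain hp hS hd he)).congr
      fun t ht => (h.logBranch_eq_regionLog hS hp hd ht (hSA ht) he).symm
  have hright : ContinuousOn (regionLog B A e) S :=
    (h.symm.continuousOn_regionLog he.1).mono fun t ht => ⟨hSA ht, hne t ht⟩
  exact eqOn_of_exp_eq hS.isPreconnected (hleft.sub hright)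
    (continuousOn_const (c := logSkew A B s' e))
    (fun t ht => (h.exp_logSkew (hSA ht) he.1 (hne t ht)).trans
      (h.exp_logSkew (hSA hs') he.1 (hne s' hs')).symm) hs' rfl hs

lemma logSkew_eq_of_mem_left (h : StackedPair A B σ) {a a' : ℂ} (ha : a ∈ A) (ha' : a' ∈ A)
    (he : e ∈ closedVoronoiRegion B A) : logSkew A B a e = logSkew A B a' e := by
  obtain ⟨J, hJsub, hJ, hJc, haJ, ha'J⟩ := exists_isCompact_isPreconnected_of_subset_isOpen
    h.isPreconnected_voronoiRegion isOpen_voronoiRegion le_rfl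
    (h.left_subset_voronoiRegion ha) (h.left_subset_voronoiRegion ha')
  obtain ⟨m, M, hM⟩ := exists_forall_re_mem_Ioo hJ
  have hS := (h.isLeftTail_left ha).union (le_max_right M 0) hJ.isClosed hJc
    ⟨a, mem_connectedComponentIn ha, haJ⟩ fun w hw => lt_max_of_lt_left (hM w hw).2
  have hSA : connectedComponentIn A a ∪ J ⊆ voronoiRegion A B :=
    union_subset ((connectedComponentIn_subset _ _).trans h.left_subset_voronoiRegion) hJsub
  have hcompl : closedVoronoiRegion B A ⊆ (connectedComponentIn A a ∪ J)ᶜ := fun w hw hwS =>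
    disjoint_closedVoronoiRegion_voronoiRegion.notMem_of_mem_left hw (hSA hwS)
  exact h.logSkew_eq_of_mem_isLeftTail hS (hSA.trans voronoiRegion_subset_closedVoronoiRegion)
    (voronoiRegion_subset_closedVoronoiRegion (hJsub haJ)) (sdiff_subset.trans hcompl)
    (Or.inr haJ) (Or.inr ha'J)
    ⟨he, ne_of_mem_of_not_mem (Or.inr haJ) (hcompl he) |>.symm⟩

lemma logSkew_eq_of_mem_closedVoronoiRegion (h : StackedPair A B σ)
    (hz : z ∈ closedVoronoiRegion A B) (hz' : z' ∈ closedVoronoiRegion A B)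
    (he : e ∈ closedVoronoiRegion B A) (hne : z ≠ e) (hne' : z' ≠ e) :
    logSkew A B z e = logSkew A B z' e := by
  have key {w : ℂ} (hw : w ∈ closedVoronoiRegion A B) (hwe : w ≠ e) :
      ∃ a ∈ A, logSkew A B w e = logSkew A B a e := by
    obtain ⟨a, ha⟩ := nearestPoints_nonempty h.isClosed_left h.nonempty_left w
    refine ⟨a, ha.1, h.logSkew_eq_of_mem_isLeftTail (h.isLeftTail_spoke w ha.1) (fun p hp => ?_) hw
      (h.closedVoronoiRegion_diff_subset_compl_spoke hw ha) left_mem_spoke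
      (Or.inr (right_mem_segment ℝ w a)) ⟨he, hwe.symm⟩⟩
    rcases h.eq_or_mem_voronoiRegion_of_mem_spoke hw ha hp with rfl | hp
    exacts [hw, voronoiRegion_subset_closedVoronoiRegion hp]
  obtain ⟨a, ha, hza⟩ := key hz hne
  obtain ⟨a', ha', hza'⟩ := key hz' hne'
  rw [hza, hza', h.logSkew_eq_of_mem_left ha ha' he]

lemma logSkew_swap (h : StackedPair A B σ) (hz : z ∈ equidistSet A B) (he : e ∈ equidistSet A B)
    (hne : z ≠ e) : logSkew A B e z = logSkew A B z e := by
  obtain ⟨a, ha⟩ := h.nonempty_left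
  have haV := h.left_subset_voronoiRegion ha
  have haF := voronoiRegion_subset_closedVoronoiRegion haV
  have hane {w : ℂ} (hw : w ∈ closedVoronoiRegion B A) : a ≠ w := fun haw =>
    disjoint_closedVoronoiRegion_voronoiRegion.notMem_of_mem_left hw (haw ▸ haV)
  rw [h.logSkew_eq_of_mem_closedVoronoiRegion he.le haF hz.ge hne.symm (hane hz.ge),
    h.logSkew_eq_of_mem_closedVoronoiRegion hz.le haF he.ge hne (hane he.ge),
    logSkew_comm, logSkew_comm A B a e, h.symm.logSkew_eq_of_mem_closedVoronoiRegion hz.ge he.ge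
      haF (hane hz.ge).symm (hane he.ge).symm]

lemma regionLog_ne_of_regionLog_eq (h : StackedPair A B σ) (hz : z ∈ equidistSet A B)
    (he : e ∈ equidistSet A B) (hne : z ≠ e) (heq : regionLog A B z e = regionLog B A z e) :
    regionLog A B e z ≠ regionLog B A e z := by
  intro heq'
  have hswap := h.logSkew_swap hz he hne
  have hzero : logSkew A B z e = 0 := by
    unfold logSkew at hswap ⊢
    linear_combination (heq - hswap) / 2 + heq' / 2
  have hexp := h.exp_logSkew hz.le he.ge hne
  rw [hzero, Complex.exp_zero] at hexp
  norm_num at hexp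

end StackedPair

/-! ### A topological characterisation of the real line -/

lemma isPreconnected_insert_of_isOpen_compl {α : Type*} [TopologicalSpace α] [PreconnectedSpace α]
    {p : α} {R : Set α} (hR : IsOpen R) (hRc : IsOpen (insert p R)ᶜ) :
    IsPreconnected (insert p R) := by
  have hcl : IsClosed (insert p R) := isOpen_compl_iff.1 hRc
  have key {u v : Set α} (hu : IsClosed u) (hv : IsClosed v) (huv : insert p R ⊆ u ∪ v)
      (hdisj : Disjoint u v) (hp : p ∈ u) : insert p R ⊆ u := by
    have hpv : p ∉ v := hdisj.notMem_of_mem_left hp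
    have heq : insert p R ∩ v = R ∩ uᶜ := by
      ext q
      refine ⟨fun ⟨hq, hqv⟩ => ⟨hq.resolve_left (ne_of_mem_of_not_mem hqv hpv),
        hdisj.notMem_of_mem_right hqv⟩, fun ⟨hq, hqu⟩ => ⟨Or.inr hq, ?_⟩⟩
      exact (huv (Or.inr hq)).resolve_left hqu
    have hclopen : IsClopen (insert p R ∩ v) :=
      ⟨hcl.inter hv, heq ▸ hR.inter hu.isOpen_compl⟩
    rcases isClopen_iff.1 hclopen with h0 | h1
    · exact (disjoint_iff_inter_eq_empty.2 h0).subset_left_of_subset_union huv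
    · exact (hpv (h1 ▸ mem_univ p : p ∈ insert p R ∩ v).2).elim
  rw [isPreconnected_iff_subset_of_fully_disjoint_closed hcl]
  intro u v hu hv huv hdisj
  rcases huv (mem_insert p R) with hp | hp
  · exact Or.inl (key hu hv huv hdisj hp)
  · exact Or.inr (key hv hu (union_comm u v ▸ huv) hdisj.symm hp)

section PreconnectedLinearOrder

variable {α : Type*} [LinearOrder α] [TopologicalSpace α] [PreconnectedSpace α]

lemma denselyOrdered_of_closedIciTopology [ClosedIicTopology α] [ClosedIciTopology α] :
    DenselyOrdered α where
  dense x y hxy := by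
    obtain ⟨z, -, hzy, hxz⟩ := isPreconnected_univ (α := α) _ _ isOpen_Iio isOpen_Ioi
      (Iio_union_Ioi_of_lt hxy).superset ⟨x, trivial, hxy⟩ ⟨y, trivial, hxy⟩
    exact ⟨z, hxz, hzy⟩

lemma orderClosedTopology_of_closedIciTopology [ClosedIicTopology α] [ClosedIciTopology α] :
    OrderClosedTopology α where
  isClosed_le' := by
    have := denselyOrdered_of_closedIciTopology (α := α)
    refine isOpen_compl_iff.1 (isOpen_iff_mem_nhds.2 fun ⟨x, y⟩ hxy => ?_)
    obtain ⟨z, hyz, hzx⟩ := exists_between (not_le.1 hxy)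
    filter_upwards [prod_mem_nhds (Ioi_mem_nhds hzx) (Iio_mem_nhds hyz)] with q hq
    exact (hq.2.trans hq.1).not_ge

variable [OrderClosedTopology α]

lemma isPreconnected_Ici_of_preconnectedSpace (p : α) : IsPreconnected (Ici p) := by
  rw [← Ioi_insert]
  refine isPreconnected_insert_of_isOpen_compl isOpen_Ioi ?_
  rw [Ioi_insert, compl_Ici]
  exact isOpen_Iio

lemma isPreconnected_Icc_of_preconnectedSpace {a b : α} (hab : a ≤ b) :
    IsPreconnected (Icc a b) := by
  have : PreconnectedSpace αᵒᵈ := inferInstanceAs (PreconnectedSpace α)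
  have : PreconnectedSpace (Iic b) :=
    isPreconnected_iff_preconnectedSpace.1 (isPreconnected_Ici_of_preconnectedSpace (α := αᵒᵈ) b)
  have himage : Subtype.val '' Ici (⟨a, hab⟩ : Iic b) = Icc a b := by
    ext x
    simp
  exact himage ▸ (isPreconnected_Ici_of_preconnectedSpace _).image _
    continuous_subtype_val.continuousOn

/- The intervals around `p` shrink to `p`, so one of them misses the compact frontier of a
relatively compact neighbourhood; being connected, it is contained in the neighbourhood. -/
lemma exists_Icc_subset_of_mem_nhds [NoMinOrder α] [NoMaxOrder α] [LocallyCompactSpace α] {p : α}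
    {V : Set α} (hV : V ∈ 𝓝 p) : ∃ a b, a < p ∧ p < b ∧ Icc a b ⊆ V := by
  have := denselyOrdered_of_closedIciTopology (α := α)
  obtain ⟨K, hK, hKV, hKc⟩ := local_compact_nhds hV
  have hpK : p ∈ interior K := mem_interior_iff_mem_nhds.2 hK
  have hfr : IsCompact (frontier (interior K)) := hKc.of_isClosed_subset isClosed_frontier
    (frontier_subset_closure.trans hKc.isClosed.closure_interior_subset)
  have hdir : Directed (· ⊇ ·) fun q : Iio p × Ioi p => Icc (q.1 : α) q.2 := fun q q' =>
    ⟨(q.1 ⊔ q'.1, q.2 ⊓ q'.2), Icc_subset_Icc le_sup_left inf_le_left,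
      Icc_subset_Icc le_sup_right inf_le_right⟩
  have hinter : frontier (interior K) ∩ ⋂ q : Iio p × Ioi p, Icc (q.1 : α) q.2 = ∅ := by
    refine eq_empty_iff_forall_notMem.2 fun x ⟨hxfr, hx⟩ => ?_
    obtain rfl : x = p := le_antisymm
      (le_of_forall_gt_imp_ge_of_dense fun b hb =>
        (mem_iInter.1 hx (Classical.arbitrary _, ⟨b, hb⟩)).2)
      (le_of_forall_lt_imp_le_of_dense fun a ha =>
        (mem_iInter.1 hx (⟨a, ha⟩, Classical.arbitrary _)).1)
    exact isOpen_interior.inter_frontier_eq.subset ⟨hpK, hxfr⟩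
  obtain ⟨⟨⟨a, ha⟩, ⟨b, hb⟩⟩, hab⟩ :=
    hfr.elim_directed_family_closed _ (fun _ => isClosed_Icc) hinter hdir
  refine ⟨a, b, ha, hb, Subset.trans ?_ (interior_subset.trans hKV)⟩
  refine (isPreconnected_Icc_of_preconnectedSpace
    (lt_trans ha hb).le).subset_of_closure_inter_subset isOpen_interior
      ⟨p, ⟨ha.le, hb.le⟩, hpK⟩ fun x ⟨hx, hxI⟩ => ?_
  by_contra hxK
  exact hab.subset ⟨⟨hx, by rwa [interior_interior]⟩, hxI⟩

lemma orderTopology_of_locallyCompactSpace [NoMinOrder α] [NoMaxOrder α] [LocallyCompactSpace α] :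
    OrderTopology α := by
  refine ⟨le_antisymm (le_generateFrom ?_) (le_of_nhds_le_nhds fun p V hV => ?_)⟩
  · rintro s ⟨a, rfl | rfl⟩
    exacts [isOpen_Ioi, isOpen_Iio]
  · obtain ⟨a, b, ha, hb, hab⟩ := exists_Icc_subset_of_mem_nhds hV
    have hIoi : IsOpen[Preorder.topology α] (Ioi a) :=
      TopologicalSpace.isOpen_generateFrom_of_mem ⟨a, Or.inl rfl⟩
    have hIio : IsOpen[Preorder.topology α] (Iio b) :=
      TopologicalSpace.isOpen_generateFrom_of_mem ⟨b, Or.inr rfl⟩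
    have hIoo : IsOpen[Preorder.topology α] (Ioo a b) :=
      @IsOpen.inter _ (Preorder.topology α) _ _ hIoi hIio
    exact mem_of_superset (@IsOpen.mem_nhds _ (Preorder.topology α) _ _ hIoo ⟨ha, hb⟩)
      (Ioo_subset_Icc_self.trans hab)

end PreconnectedLinearOrder

lemma nonempty_orderIso_real_of_dense {α : Type*} [LinearOrder α] [TopologicalSpace α]
    [OrderTopology α] [PreconnectedSpace α] [NoMinOrder α] [NoMaxOrder α] {D : Set α}
    (hD : Dense D) (f : D ≃o ℚ) : Nonempty (α ≃o ℝ) := by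
  have := denselyOrdered_of_preconnectedSpace (α := α)
  set g : α → ℝ := fun p => sSup ((fun d => (f d : ℝ)) '' {d : D | (d : α) ≤ p})
  have hf {d d' : D} (h : (d : α) ≤ d') : (f d : ℝ) ≤ f d' := Rat.cast_le.2 (f.monotone h)
  have hg_le {p : α} {d : D} (h : p ≤ d) : g p ≤ f d := by
    obtain ⟨c, hc, hcp⟩ := hD.exists_lt p
    refine csSup_le (Nonempty.image _ ⟨⟨c, hc⟩, hcp.le⟩) ?_
    rintro _ ⟨d', hd', rfl⟩
    exact hf (le_trans hd' h)
  have hle_g {p : α} {d : D} (h : (d : α) ≤ p) : (f d : ℝ) ≤ g p := by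
    obtain ⟨c, hc, hpc⟩ := hD.exists_gt p
    refine le_csSup ⟨f ⟨c, hc⟩, ?_⟩ ⟨d, h, rfl⟩
    rintro _ ⟨d', hd', rfl⟩
    exact hf (d' := ⟨c, hc⟩) (le_trans hd' hpc.le)
  have hg_coe (q : ℚ) : g (f.symm q) = q := by
    simpa using (hg_le (d := f.symm q) le_rfl).antisymm (hle_g le_rfl)
  have hmono : StrictMono g := fun p q hpq => by
    obtain ⟨d, hd, hpd, hdq⟩ := hD.exists_between hpq
    obtain ⟨d', hd', hdd', hd'q⟩ := hD.exists_between hdq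
    exact (hg_le (d := ⟨d, hd⟩) hpd.le).trans_lt <|
      (Rat.cast_lt.2 (f.strictMono (Subtype.mk_lt_mk.2 hdd'))).trans_le
        (hle_g (d := ⟨d', hd'⟩) hd'q.le)
  have hdense : DenseRange g :=
    Rat.denseRange_cast.mono (range_subset_iff.2 fun q => ⟨f.symm q, hg_coe q⟩)
  refine ⟨hmono.orderIsoOfSurjective g fun x => mem_range_of_exists_le_of_exists_ge
    (hmono.monotone.continuous_of_denseRange hdense) ?_ ?_⟩
  · obtain ⟨q, hq⟩ := exists_rat_lt x
    exact ⟨f.symm q, (hg_coe q).trans_le hq.le⟩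
  · obtain ⟨q, hq⟩ := exists_rat_gt x
    exact ⟨f.symm q, hq.le.trans_eq (hg_coe q).symm⟩

lemma nonempty_orderIso_real {α : Type*} [LinearOrder α] [TopologicalSpace α] [OrderTopology α]
    [PreconnectedSpace α] [TopologicalSpace.SeparableSpace α] [Nonempty α] [NoMinOrder α]
    [NoMaxOrder α] : Nonempty (α ≃o ℝ) := by
  have := denselyOrdered_of_preconnectedSpace (α := α)
  obtain ⟨D, hDc, hD⟩ := TopologicalSpace.exists_countable_dense α
  have := hDc.to_subtype
  have := hD.nonempty.to_subtype
  have : DenselyOrdered D := ⟨fun x y hxy =>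
    let ⟨z, hz, hxz⟩ := hD.exists_between hxy
    ⟨⟨z, hz⟩, hxz⟩⟩
  have : NoMinOrder D := ⟨fun x => let ⟨y, hy, hyx⟩ := hD.exists_lt (x : α); ⟨⟨y, hy⟩, hyx⟩⟩
  have : NoMaxOrder D := ⟨fun x => let ⟨y, hy, hxy⟩ := hD.exists_gt (x : α); ⟨⟨y, hy⟩, hxy⟩⟩
  obtain ⟨f⟩ := Order.iso_of_countable_dense D ℚ
  exact nonempty_orderIso_real_of_dense hD f

/-- A family of right sides on a space `Y`: each point `p` cuts `Y` into the open set `R p` and the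
open complement of `insert p (R p)`, consistently for different points. On a connected space it
is the family of right rays of a linear order. -/
structure RightSides {Y : Type*} [TopologicalSpace Y] (R : Y → Set Y) : Prop where
  isOpen (p : Y) : IsOpen (R p)
  isOpen_compl (p : Y) : IsOpen (insert p (R p))ᶜ
  nonempty_compl (p : Y) : (insert p (R p))ᶜ.Nonempty
  notMem_self (p : Y) : p ∉ R p
  asymm {p q : Y} : q ∈ R p → p ∉ R q
  inter_nonempty (p q : Y) : (R p ∩ R q).Nonempty

namespace RightSides

variable {Y : Type*} [TopologicalSpace Y] {R : Y → Set Y} {p q : Y}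

lemma isPreconnected_insert [PreconnectedSpace Y] (h : RightSides R) (p : Y) :
    IsPreconnected (insert p (R p)) :=
  isPreconnected_insert_of_isOpen_compl (h.isOpen p) (h.isOpen_compl p)

lemma insert_subset [PreconnectedSpace Y] (h : RightSides R) (hq : q ∉ insert p (R p)) :
    insert p (R p) ⊆ R q := by
  refine (h.isPreconnected_insert p).subset_left_of_subset_union (h.isOpen q) (h.isOpen_compl q)
    (disjoint_compl_right.mono_left (subset_insert _ _)) (fun x hx => ?_) ?_
  · by_cases hxq : x ∈ insert q (R q)
    · exact Or.inl (hxq.resolve_left (ne_of_mem_of_not_mem hx hq))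
    · exact Or.inr hxq
  · exact (h.inter_nonempty p q).mono (inter_subset_inter_left _ (subset_insert _ _))

lemma trans [PreconnectedSpace Y] (h : RightSides R) {r : Y} (hpq : q ∈ R p) (hqr : r ∈ R q) :
    r ∈ R p := by
  refine h.insert_subset (fun hp => ?_) (mem_insert_of_mem q hqr)
  rcases hp with rfl | hp
  exacts [h.notMem_self p hpq, h.asymm hpq hp]

lemma isStrictTotalOrder [PreconnectedSpace Y] (h : RightSides R) :
    IsStrictTotalOrder Y fun p q => q ∈ R p where
  trichotomous p q hpq hqp := by
    by_contra hne
    exact hqp (h.insert_subset (fun hq => hq.elim (Ne.symm hne) hpq) (mem_insert p _))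
  irrefl := h.notMem_self
  trans _ _ _ := h.trans

lemma nonempty_homeomorph_real [LocallyCompactSpace Y] [TopologicalSpace.SeparableSpace Y]
    [PreconnectedSpace Y] [Nonempty Y] (h : RightSides R) : Nonempty (Y ≃ₜ ℝ) := by
  classical
  have := h.isStrictTotalOrder
  let _ : LinearOrder Y := linearOrderOfSTO fun p q => q ∈ R p
  have hIoi (p : Y) : Ioi p = R p := rfl
  have hIio (p : Y) : Iio p = (insert p (R p))ᶜ := by
    rw [← hIoi, Ioi_insert, compl_Ici]
  have : ClosedIicTopology Y := ⟨fun p => by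
    rw [← isOpen_compl_iff, compl_Iic, hIoi]
    exact h.isOpen p⟩
  have : ClosedIciTopology Y := ⟨fun p => by
    rw [← isOpen_compl_iff, compl_Ici, hIio]
    exact h.isOpen_compl p⟩
  have : NoMaxOrder Y := ⟨fun p => (h.inter_nonempty p p).mono inter_subset_left⟩
  have : NoMinOrder Y := ⟨fun p => (h.nonempty_compl p).mono (hIio p).superset⟩
  have := orderClosedTopology_of_closedIciTopology (α := Y)
  have := orderTopology_of_locallyCompactSpace (α := Y)
  obtain ⟨f⟩ := nonempty_orderIso_real (α := Y)
  exact ⟨f.toHomeomorph⟩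

end RightSides

/-! ### The equidistant set is a line -/

/-- The points of the equidistant set on the right-hand side of its point `p`: those where the
branches of `log (· - p)` on the two closed Voronoi regions agree. -/
def rightSide (A B : Set ℂ) (p : equidistSet A B) : Set (equidistSet A B) :=
  {q | q ≠ p ∧ regionLog A B p q = regionLog B A p q}

lemma isClosed_equidistSet (A B : Set ℂ) : IsClosed (equidistSet A B) :=
  isClosed_eq (continuous_infDist_pt A) (continuous_infDist_pt B)

/- A continuous logarithm of `z - p` around the circle `θ ↦ p + exp (θ I)` would be
`θ I + const`, which is not `2π`-periodic. -/
lemma not_continuousOn_of_exp_eq_sub {p : ℂ} {l : ℂ → ℂ}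
    (hl : ∀ z ≠ p, Complex.exp (l z) = z - p) : ¬ ContinuousOn l {p}ᶜ := by
  intro hc
  set γ : ℝ → ℂ := fun θ => p + Complex.exp (θ * Complex.I) with hγ
  have hγp (θ : ℝ) : γ θ ≠ p := by simp [hγ]
  have hexp (θ : ℝ) : Complex.exp (l (γ θ)) = Complex.exp (l (γ 0) + θ * Complex.I) := by
    rw [Complex.exp_add, hl _ (hγp θ), hl _ (hγp 0)]
    simp [hγ]
  have heq := eqOn_of_exp_eq isPreconnected_univ
    (hc.comp (f := γ) (by fun_prop) fun θ _ => hγp θ)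
    (by fun_prop : ContinuousOn (fun θ : ℝ => l (γ 0) + θ * Complex.I) univ)
    (fun θ _ => hexp θ) (mem_univ 0) (by simp) (mem_univ (2 * Real.pi))
  have hper : γ (2 * Real.pi) = γ 0 := by simp [hγ]
  simp [hper, Real.pi_ne_zero] at heq

lemma eq_zero_of_exp_eq_one {w : ℂ} (hw : Complex.exp w = 1) (hlt : ‖w‖ < 1) : w = 0 := by
  have him : |w.im| < 1 := (Complex.abs_im_le_norm w).trans_lt hlt
  have hpi := Real.pi_gt_three
  calc
    w = Complex.log (Complex.exp w) := (Complex.log_exp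
      (by linarith [neg_lt_of_abs_lt him]) (by linarith [le_abs_self w.im])).symm
    _ = 0 := by rw [hw, Complex.log_one]

namespace StackedPair

variable {A B : Set ℂ} {σ : ℝ}

lemma exists_regionLog_ne (h : StackedPair A B σ) {p : ℂ} (hp : p ∈ equidistSet A B) :
    ∃ q ∈ equidistSet A B, q ≠ p ∧ regionLog A B p q ≠ regionLog B A p q := by
  classical
  by_contra! hall
  have hcompl : closure (closedVoronoiRegion B A)ᶜ ⊆ closedVoronoiRegion A B :=
    closure_minimal (compl_subset_iff_union.2 (union_comm _ _ ▸ closedVoronoiRegion_union))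
      isClosed_closedVoronoiRegion
  refine not_continuousOn_of_exp_eq_sub (p := p)
    (l := (closedVoronoiRegion B A).piecewise (regionLog A B p) (regionLog B A p))
    (fun z hz => ?_) (ContinuousOn.piecewise (fun z hz => ?_) ?_ ?_)
  · by_cases hzB : z ∈ closedVoronoiRegion B A
    · rw [piecewise_eq_of_mem _ _ _ hzB, h.exp_regionLog hp.le ⟨hzB, hz⟩]
    · rw [piecewise_eq_of_notMem _ _ _ hzB,
        h.symm.exp_regionLog hp.ge ⟨hcompl (subset_closure hzB), hz⟩]
  · rw [frontier_eq_closure_inter_closure, isClosed_closedVoronoiRegion.closure_eq] at hz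
    exact hall z (closedVoronoiRegion_inter.subset ⟨hcompl hz.2.2, hz.2.1⟩) hz.1
  · rw [isClosed_closedVoronoiRegion.closure_eq]
    exact (h.continuousOn_regionLog hp.le).mono fun z hz => ⟨hz.2, hz.1⟩
  · exact (h.symm.continuousOn_regionLog hp.ge).mono fun z hz => ⟨hcompl hz.2, hz.1⟩

lemma continuousOn_regionLog_sub (h : StackedPair A B σ) (p : equidistSet A B) :
    ContinuousOn (fun q : equidistSet A B => regionLog A B p q - regionLog B A p q) {p}ᶜ :=
  ((h.continuousOn_regionLog p.2.le).comp continuous_subtype_val.continuousOn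
    fun q hq => ⟨q.2.ge, Subtype.coe_ne_coe.2 hq⟩).sub
  ((h.symm.continuousOn_regionLog p.2.ge).comp continuous_subtype_val.continuousOn
    fun q hq => ⟨q.2.le, Subtype.coe_ne_coe.2 hq⟩)

lemma exp_regionLog_sub (h : StackedPair A B σ) {p q : ℂ} (hp : p ∈ equidistSet A B)
    (hq : q ∈ equidistSet A B) (hqp : q ≠ p) :
    Complex.exp (regionLog A B p q - regionLog B A p q) = 1 := by
  rw [Complex.exp_sub, h.exp_regionLog hp.le ⟨hq.ge, hqp⟩,
    h.symm.exp_regionLog hp.ge ⟨hq.le, hqp⟩, div_self (sub_ne_zero.2 hqp)]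

lemma isOpen_rightSide (h : StackedPair A B σ) (p : equidistSet A B) :
    IsOpen (rightSide A B p) := by
  have heq : rightSide A B p = {p}ᶜ ∩
      (fun q : equidistSet A B => regionLog A B p q - regionLog B A p q) ⁻¹' ball 0 1 := by
    ext q
    refine and_congr_right fun hqp => ⟨fun hq => ?_, fun hq => ?_⟩
    · simp [hq]
    · exact sub_eq_zero.1 (eq_zero_of_exp_eq_one
        (h.exp_regionLog_sub p.2 q.2 (Subtype.coe_ne_coe.2 hqp)) (mem_ball_zero_iff.1 hq))
  exact heq ▸ (h.continuousOn_regionLog_sub p).isOpen_inter_preimage isOpen_compl_singleton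
    isOpen_ball

lemma isOpen_compl_insert_rightSide (h : StackedPair A B σ) (p : equidistSet A B) :
    IsOpen (insert p (rightSide A B p))ᶜ := by
  have heq : (insert p (rightSide A B p))ᶜ = {p}ᶜ ∩
      (fun q : equidistSet A B => regionLog A B p q - regionLog B A p q) ⁻¹' {0}ᶜ := by
    ext q
    simp +contextual [rightSide, sub_eq_zero]
  exact heq ▸ (h.continuousOn_regionLog_sub p).isOpen_inter_preimage isOpen_compl_singleton
    isOpen_compl_singleton

lemma mem_rightSide_of_spokeBound_le (h : StackedPair A B σ) {p q : equidistSet A B}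
    (hpq : spokeBound (p : ℂ) ≤ (q : ℂ).re) : q ∈ rightSide A B p := by
  refine ⟨?_, ?_⟩
  · rintro rfl
    exact (re_lt_spokeBound _).not_ge hpq
  · rw [h.regionLog_eq_log p.2.le hpq, h.symm.regionLog_eq_log p.2.ge hpq]

lemma rightSides (h : StackedPair A B σ) : RightSides (rightSide A B) where
  isOpen := h.isOpen_rightSide
  isOpen_compl := h.isOpen_compl_insert_rightSide
  nonempty_compl p := by
    obtain ⟨q, hq, hqp, hne⟩ := h.exists_regionLog_ne p.2
    exact ⟨⟨q, hq⟩, fun hmem => hmem.elim (fun heq => hqp (congrArg Subtype.val heq))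
      fun hr => hne hr.2⟩
  notMem_self p hp := hp.1 rfl
  asymm {p q} hq hp := h.regionLog_ne_of_regionLog_eq p.2 q.2
    (Subtype.coe_ne_coe.2 hp.1) hq.2 hp.2
  inter_nonempty p q := by
    obtain ⟨z, hz, hre⟩ := h.exists_mem_equidistSet_re_eq_of_nonneg
      ((spokeBound_pos p).le.trans (le_max_left (spokeBound (p : ℂ)) (spokeBound (q : ℂ))))
    exact ⟨⟨z, hz⟩, h.mem_rightSide_of_spokeBound_le (hre ▸ le_max_left _ _),
      h.mem_rightSide_of_spokeBound_le (hre ▸ le_max_right _ _)⟩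

lemma nonempty_homeomorph_real (h : StackedPair A B σ) : Nonempty (equidistSet A B ≃ₜ ℝ) := by
  have := isPreconnected_iff_preconnectedSpace.1 h.isPreconnected_equidistSet
  have := (isClosed_equidistSet A B).locallyCompactSpace
  obtain ⟨z, hz, -⟩ := h.exists_mem_equidistSet_re_le 0
  have : Nonempty (equidistSet A B) := ⟨⟨z, hz⟩⟩
  exact h.rightSides.nonempty_homeomorph_real

end StackedPair

/-- if `X̂ = A ∪ B` with `A, B` disjoint, closed, nonempty and `A` lying
above `B`, then `E(A,B)` is a closed ray, `Re(E(A,B)) = ℝ`, and for every `x > 0` the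
vertical line `Re z = x` meets `E(A,B)` in exactly one point. -/
theorem equidistSet_closedRay
    (X : Set ℂ) (hXne : X.Nonempty) (hXcpt : IsCompact X) (hXconn : IsConnected X)
    (hXns : IsConnected Xᶜ) (h0 : (0:ℂ) ∈ frontier X) (hXb : X ⊆ Metric.ball 0 1)
    (A B : Set ℂ) (hAB : hatSet X = A ∪ B) (hdisj : Disjoint A B)
    (hAcl : IsClosed A) (hBcl : IsClosed B)
    (hAne : A.Nonempty) (hBne : B.Nonempty) (habove : LiesAboveSets A B) :
    IsClosedRay (equidistSet A B) ∧
    Complex.re '' equidistSet A B = Set.univ ∧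
    (∀ x : ℝ, 0 < x → ∃! z : ℂ, z ∈ equidistSet A B ∧ z.re = x) := by
  have h := stackedPair_of_liesAboveSets hXcpt hXconn.isPreconnected hXns.isPreconnected h0 hXb hAB
    hdisj hAcl hBcl hAne hBne habove
  exact ⟨⟨isClosed_equidistSet A B, h.nonempty_homeomorph_real⟩, h.re_image_equidistSet,
    fun x hx => h.existsUnique_mem_equidistSet_re_eq hx⟩
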